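/- arXiv:1409.3159 — 2 statements merged into one kernel-verified Lean document; each statement's English description precedes it below -/
import Mathlib

section
/- Let G be a connected graph with σ_3 ≥ t_{k+1} − λ(k − 2) for some integers k ≥ 2 and λ ≥ 2. Then t_k ≥ t_{k+1} − λ + 1. (Corollary 16) -/
open SimpleGraph

variable {V : Type*}

/-- A set of vertices is independent in `G`. -/
def IsIndSet (G : SimpleGraph V) (s : Set V) : Prop :=
  ∀ ⦃u⦄, u ∈ s → ∀ ⦃v⦄, v ∈ s → ¬ G.Adj u v

/-- The number of end-vertices (vertices of degree one) of a subgraph `H`. -/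
noncomputable def endVertexCount {G : SimpleGraph V} (H : G.Subgraph) : ℕ :=
  {v : V | v ∈ H.verts ∧ (H.neighborSet v).ncard = 1}.ncard

/-- `H` is a cycle; a single vertex and a single edge are regarded as
simple cycles of orders 1 and 2, respectively. -/
def IsCycleSubgraph {G : SimpleGraph V} (H : G.Subgraph) : Prop :=
  H.Connected ∧ (H.verts.ncard ≤ 2 ∨ ∀ v ∈ H.verts, (H.neighborSet v).ncard = 2)

/-- `H` is a `k`-ended tree in `G`: a tree with at most `k` end-vertices (leaves);
a cycle is regarded as a 1-ended tree. -/
def IsKEndedTree (G : SimpleGraph V) (k : ℕ) (H : G.Subgraph) : Prop :=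
  (H.coe.IsTree ∧ endVertexCount H ≤ k) ∨ (1 ≤ k ∧ IsCycleSubgraph H)

/-- `t k`: the order of a largest `k`-ended tree in `G`. -/
noncomputable def maxKEndedOrder (G : SimpleGraph V) (k : ℕ) : ℕ :=
  sSup {n | ∃ H : G.Subgraph, IsKEndedTree G k H ∧ H.verts.ncard = n}

/-- `σ m`: the minimum degree sum over independent sets of `m` vertices of `G`,
and `+∞` if the independence number of `G` is less than `m`. -/
noncomputable def minDegreeSum (G : SimpleGraph V) [Fintype V] [DecidableRel G.Adj]
    (m : ℕ) : ℕ∞ :=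
  ⨅ s ∈ {s : Finset V | s.card = m ∧ IsIndSet G ↑s}, (∑ v ∈ s, G.degree v : ℕ∞)


/-- A connected graph with at most as many edges as vertices is a tree, a cycle, or becomes a tree
after deleting an edge with an end of degree at least three. -/
theorem SimpleGraph.Connected.isTree_or_cycle_or_isTree_deleteEdges {U : Type*} [Finite U]
    {F : SimpleGraph U} (hF : F.Connected) (hcard : Nat.card F.edgeSet ≤ Nat.card U) :
    F.IsTree ∨ (∀ v, (F.neighborSet v).ncard = 2) ∨
      ∃ u v, F.Adj u v ∧ 3 ≤ (F.neighborSet u).ncard ∧ (F.deleteEdges {s(u, v)}).IsTree := by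
  by_cases hac : F.IsAcyclic
  · exact Or.inl ⟨hF, hac⟩
  right
  simp only [IsAcyclic, not_forall, not_not] at hac
  obtain ⟨a, w, hw⟩ := hac
  by_cases hdeg : ∀ v ∈ w.support, (F.neighborSet v).ncard ≤ 2
  · left
    have hnbr : ∀ v ∈ w.support, w.toSubgraph.neighborSet v = F.neighborSet v := fun v hv ↦
      Set.eq_of_subset_of_ncard_le (w.toSubgraph.neighborSet_subset v)
        (by rw [hw.ncard_neighborSet_toSubgraph_eq_two hv]; exact hdeg v hv) (Set.toFinite _)
    have hclosed : ∀ u v, F.Walk u v → u ∈ w.support → v ∈ w.support := by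
      intro u v q
      induction q with
      | nil => exact id
      | cons hadj q ih =>
        intro hu
        apply ih
        have : _ ∈ F.neighborSet _ := hadj
        rw [← hnbr _ hu] at this
        exact (w.mem_verts_toSubgraph).1 (w.toSubgraph.edge_vert (Subgraph.Adj.symm this))
    intro v
    have hv : v ∈ w.support := by
      obtain ⟨q⟩ := hF.preconnected a v
      exact hclosed a v q w.start_mem_support
    rw [← hnbr v hv, hw.ncard_neighborSet_toSubgraph_eq_two hv]
  · right
    push Not at hdeg
    obtain ⟨u, hu, hdegu⟩ := hdeg
    obtain ⟨v, hv⟩ : (w.toSubgraph.neighborSet u).Nonempty := by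
      apply Set.nonempty_of_ncard_ne_zero
      rw [hw.ncard_neighborSet_toSubgraph_eq_two hu]
      norm_num
    have hadj : w.toSubgraph.Adj u v := hv
    have hmem : s(u, v) ∈ w.edges := Walk.mem_edges_toSubgraph w |>.1 hadj
    refine ⟨u, v, hadj.adj_sub, hdegu, ?_⟩
    have hconn : (F.deleteEdges {s(u, v)}).Connected :=
      hF.connected_delete_edge_of_not_isBridge
        fun hb ↦ (isBridge_iff_forall_cycle_notMem (show s(u, v) ∈ F.edgeSet from hadj.adj_sub)).1
          hb w hw hmem
    have hlt : Nat.card (F.deleteEdges {s(u, v)}).edgeSet + 1 ≤ Nat.card F.edgeSet := by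
      rw [edgeSet_deleteEdges, Nat.card_coe_set_eq, Nat.card_coe_set_eq]
      exact (Set.ncard_sdiff_singleton_add_one (show s(u, v) ∈ F.edgeSet from hadj.adj_sub)
        (Set.toFinite _)).le
    have := hconn.card_vert_le_card_edgeSet_add_one
    exact isTree_iff_connected_and_card.2 ⟨hconn, by omega⟩

theorem SimpleGraph.Subgraph.ncard_neighborSet_coe {G : SimpleGraph V} (H : G.Subgraph)
    (v : H.verts) : (H.coe.neighborSet v).ncard = (H.neighborSet v).ncard := by
  rw [← Set.ncard_image_of_injective (H.coe.neighborSet v) Subtype.val_injective]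
  congr 1
  ext x
  simp only [Set.mem_image, mem_neighborSet, Subtype.exists, exists_and_right,
    exists_eq_right, Subgraph.mem_neighborSet]
  exact ⟨fun ⟨_, h⟩ ↦ h, fun h ↦ ⟨H.edge_vert h.symm, h⟩⟩

theorem SimpleGraph.Subgraph.card_edgeSet_coe {G : SimpleGraph V} (H : G.Subgraph) :
    Nat.card H.coe.edgeSet = H.edgeSet.ncard := by
  rw [← H.image_coe_edgeSet_coe, Nat.card_coe_set_eq,
    Set.ncard_image_of_injective _ (Sym2.map.injective Subtype.val_injective)]

section Finite

variable [Finite V] {G : SimpleGraph V}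

theorem bddAbove_orders (G : SimpleGraph V) (k : ℕ) :
    BddAbove {n | ∃ H : G.Subgraph, IsKEndedTree G k H ∧ H.verts.ncard = n} := by
  refine ⟨Nat.card V, ?_⟩
  rintro n ⟨H, -, rfl⟩
  exact Set.ncard_le_card _

theorem IsKEndedTree.ncard_verts_le {k : ℕ} {H : G.Subgraph} (hH : IsKEndedTree G k H) :
    H.verts.ncard ≤ maxKEndedOrder G k :=
  le_csSup (bddAbove_orders G k) ⟨H, hH, rfl⟩

theorem exists_isKEndedTree_ncard_verts_eq [Nonempty V] (G : SimpleGraph V) {k : ℕ} (hk : 1 ≤ k) :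
    ∃ H : G.Subgraph, IsKEndedTree G k H ∧ H.verts.ncard = maxKEndedOrder G k := by
  refine Nat.sSup_mem ?_ (bddAbove_orders G k)
  obtain ⟨v⟩ := ‹Nonempty V›
  exact ⟨_, G.singletonSubgraph v, Or.inr ⟨hk, Subgraph.singletonSubgraph_connected,
    Or.inl (by simp)⟩, rfl⟩

theorem SimpleGraph.Subgraph.Connected.isTree_coe {H : G.Subgraph} (hH : H.Connected)
    (hcard : H.edgeSet.ncard + 1 ≤ H.verts.ncard) : H.coe.IsTree := by
  have := hH.coe.card_vert_le_card_edgeSet_add_one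
  rw [H.card_edgeSet_coe, Nat.card_coe_set_eq] at this
  refine isTree_iff_connected_and_card.2 ⟨hH.coe, ?_⟩
  rw [H.card_edgeSet_coe, Nat.card_coe_set_eq]
  omega

/-- A connected subgraph with at most as many edges as vertices and at most `k` end-vertices has
at most as many vertices as a largest `(k + 1)`-ended tree. -/
theorem SimpleGraph.Subgraph.Connected.ncard_verts_le {k : ℕ} {H : G.Subgraph} (hH : H.Connected)
    (hcard : H.edgeSet.ncard ≤ H.verts.ncard) (hends : endVertexCount H ≤ k) :
    H.verts.ncard ≤ maxKEndedOrder G (k + 1) := by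
  have hcoe := hH.coe.isTree_or_cycle_or_isTree_deleteEdges
    (by rwa [H.card_edgeSet_coe, Nat.card_coe_set_eq])
  rcases hcoe with htree | hcycle | ⟨u, v, hadj, hdeg, htree⟩
  · exact IsKEndedTree.ncard_verts_le (Or.inl ⟨htree, by omega⟩)
  · refine IsKEndedTree.ncard_verts_le (Or.inr ⟨by omega, hH, Or.inr fun v hv ↦ ?_⟩)
    rw [← hcycle ⟨v, hv⟩, H.ncard_neighborSet_coe]
  · rw [H.deleteEdges_coe_eq] at htree
    set s : Set (Sym2 V) := Sym2.map (↑) '' {s(u, v)} with hs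
    have hs' : s = {s(u.1, v.1)} := by simp [hs]
    rw [H.ncard_neighborSet_coe] at hdeg
    have hsub : {x : V | x ∈ (H.deleteEdges s).verts ∧ ((H.deleteEdges s).neighborSet x).ncard = 1}
        ⊆ insert v.1 {x : V | x ∈ H.verts ∧ (H.neighborSet x).ncard = 1} := by
      rintro x ⟨hx, hx1⟩
      by_cases hxv : x = v.1
      · exact Or.inl hxv
      refine Or.inr ⟨hx, ?_⟩
      by_cases hxu : x = u.1
      · exfalso
        subst hxu
        have h1 : H.neighborSet u ⊆ insert v.1 ((H.deleteEdges s).neighborSet u) := by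
          intro y hy
          by_cases hyv : y = v.1
          · exact Or.inl hyv
          · refine Or.inr ?_
            simp only [Subgraph.mem_neighborSet, Subgraph.deleteEdges_adj] at hy ⊢
            refine ⟨hy, ?_⟩
            simp [hs', hyv]
            grind
        have h2 := Set.ncard_le_ncard h1 (Set.toFinite _)
        have h3 := Set.ncard_insert_le v.1 ((H.deleteEdges s).neighborSet u)
        omega
      · rw [← hx1]
        congr 1
        ext y
        simp only [Subgraph.mem_neighborSet, Subgraph.deleteEdges_adj]
        refine ⟨fun h ↦ ⟨h, ?_⟩, fun h ↦ h.1⟩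
        simp [hs', hxv, hxu]
    refine IsKEndedTree.ncard_verts_le (H := H.deleteEdges s) (Or.inl ⟨htree, ?_⟩)
    exact (Set.ncard_le_ncard hsub (Set.toFinite _)).trans
      ((Set.ncard_insert_le _ _).trans (Nat.succ_le_succ hends))

end Finite

/-- `Below p x w` says that `x` is reached from `w` by iterating the parent map `p`. -/
inductive Below (p : V → V) (x : V) : V → Prop
  | refl : Below p x x
  | step {w : V} : Below p x (p w) → Below p x w

/-- The parent map `p` describes a tree in `G` with vertex set `W` and root `c`; the function `h`
decreases along `p` away from the root. -/
structure IsRootedTree (G : SimpleGraph V) (W : Finset V) (c : V) (p : V → V) (h : V → ℕ) :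
    Prop where
  root_mem : c ∈ W
  parent_root : p c = c
  parent_mem : ∀ x ∈ W, p x ∈ W
  adj_parent : ∀ x ∈ W, x ≠ c → G.Adj x (p x)
  height_lt : ∀ x ∈ W, x ≠ c → h (p x) < h x

/-- `w` is a child of `x` in the tree with vertex set `W`, root `c` and parent map `p`. -/
def IsChild (W : Finset V) (c : V) (p : V → V) (w x : V) : Prop :=
  w ∈ W ∧ w ≠ c ∧ p w = x

namespace Below

variable {p : V → V} {x y w : V}

theorem parent (h : Below p x w) (hne : w ≠ x) : Below p x (p w) := by
  cases h with
  | refl => exact absurd rfl hne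
  | step h => exact h

theorem trans (hxy : Below p x y) (hyw : Below p y w) : Below p x w := by
  induction hyw with
  | refl => exact hxy
  | step _ ih => exact .step ih

theorem eq_of_fixed {c : V} (hc : p c = c) (h : Below p x c) : x = c := by
  suffices ∀ w, Below p x w → w = c → x = c from this c h rfl
  intro w h
  induction h with
  | refl => exact id
  | step _ ih => rintro rfl; exact ih hc

end Below

namespace IsRootedTree

variable {G : SimpleGraph V} {W : Finset V} {c : V} {p : V → V} {h : V → ℕ}

theorem height_le_of_below (hT : IsRootedTree G W c p h) {x w : V} (hw : w ∈ W)
    (hb : Below p x w) : h x ≤ h w := by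
  induction hb with
  | refl => exact le_rfl
  | @step w _ ih =>
    by_cases hwc : w = c
    · subst hwc
      rw [hT.parent_root] at ih
      exact ih hw
    · exact (ih (hT.parent_mem w hw)).trans (hT.height_lt w hw hwc).le

theorem not_below_parent (hT : IsRootedTree G W c p h) {x : V} (hx : x ∈ W) (hxc : x ≠ c) :
    ¬ Below p x (p x) := fun hb ↦
  (hT.height_le_of_below (hT.parent_mem x hx) hb).not_gt (hT.height_lt x hx hxc)

theorem parent_ne (hT : IsRootedTree G W c p h) {x : V} (hx : x ∈ W) (hxc : x ≠ c) : p x ≠ x :=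
  (hT.adj_parent x hx hxc).ne'

theorem not_below_root (hT : IsRootedTree G W c p h) {x : V} (hxc : x ≠ c) : ¬ Below p x c :=
  fun hb ↦ hxc (hb.eq_of_fixed hT.parent_root)

theorem below_root (hT : IsRootedTree G W c p h) {x : V} (hx : x ∈ W) : Below p c x := by
  induction hn : h x using Nat.strong_induction_on generalizing x with
  | _ n ih =>
    by_cases hxc : x = c
    · exact hxc ▸ .refl
    · exact .step (ih _ (hn ▸ hT.height_lt x hx hxc) (hT.parent_mem x hx) rfl)

theorem exists_isChild_below (hT : IsRootedTree G W c p h) {x w : V} (hw : w ∈ W)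
    (hb : Below p x w) (hne : w ≠ x) : ∃ z, IsChild W c p z x ∧ Below p z w := by
  induction hb with
  | refl => exact absurd rfl hne
  | @step w hb ih =>
    by_cases hwc : w = c
    · subst hwc
      rw [hT.parent_root] at hb
      exact absurd (hb.eq_of_fixed hT.parent_root).symm hne
    by_cases hpx : p w = x
    · exact ⟨w, ⟨hw, hwc, hpx⟩, .refl⟩
    · obtain ⟨z, hz, hzb⟩ := ih (hT.parent_mem w hw) hpx
      exact ⟨z, hz, .step hzb⟩

/-- The subgraph formed by the edges between vertices and their parents. -/
def subgraph (hT : IsRootedTree G W c p h) : G.Subgraph where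
  verts := W
  Adj x y := IsChild W c p x y ∨ IsChild W c p y x
  adj_sub := by
    rintro x y (⟨hx, hxc, rfl⟩ | ⟨hy, hyc, rfl⟩)
    · exact hT.adj_parent x hx hxc
    · exact (hT.adj_parent y hy hyc).symm
  edge_vert := by
    rintro x y (⟨hx, hxc, rfl⟩ | ⟨hy, hyc, rfl⟩)
    · exact hx
    · exact hT.parent_mem y hy
  symm := ⟨fun _ _ ↦ Or.symm⟩

theorem subgraph_connected (hT : IsRootedTree G W c p h) : hT.subgraph.Connected := by
  have hroot : ∀ x : hT.subgraph.verts, hT.subgraph.coe.Reachable x ⟨c, hT.root_mem⟩ := by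
    rintro ⟨x, hx⟩
    induction hn : h x using Nat.strong_induction_on generalizing x with
    | _ n ih =>
      by_cases hxc : x = c
      · subst hxc; rfl
      · have hadj : hT.subgraph.coe.Adj ⟨x, hx⟩ ⟨p x, hT.parent_mem x hx⟩ :=
          Or.inl ⟨hx, hxc, rfl⟩
        exact hadj.reachable.trans (ih _ (hn ▸ hT.height_lt x hx hxc) (p x) _ rfl)
  have : Nonempty hT.subgraph.verts := ⟨⟨c, hT.root_mem⟩⟩
  exact ⟨⟨fun x y ↦ (hroot x).trans (hroot y).symm⟩⟩

theorem ncard_edgeSet_subgraph_add_one_le (hT : IsRootedTree G W c p h) :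
    hT.subgraph.edgeSet.ncard + 1 ≤ W.card := by
  classical
  have hsub : hT.subgraph.edgeSet ⊆ ((W.erase c).image fun x ↦ s(x, p x) : Finset (Sym2 V)) := by
    intro e
    induction e using Sym2.ind with
    | _ x y =>
      intro hxy
      obtain ⟨hx, hxc, rfl⟩ | ⟨hy, hyc, rfl⟩ : IsChild W c p x y ∨ IsChild W c p y x := hxy
      · simp only [Finset.coe_image, Set.mem_image, Finset.mem_coe, Finset.mem_erase]
        exact ⟨x, ⟨hxc, hx⟩, rfl⟩
      · simp only [Finset.coe_image, Set.mem_image, Finset.mem_coe, Finset.mem_erase]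
        exact ⟨y, ⟨hyc, hy⟩, Sym2.eq_swap⟩
  have h1 := Set.ncard_le_ncard hsub (Finset.finite_toSet _)
  rw [Set.ncard_coe_finset] at h1
  have h2 := h1.trans Finset.card_image_le
  rw [Finset.card_erase_of_mem hT.root_mem] at h2
  have := Finset.card_pos.2 ⟨c, hT.root_mem⟩
  omega

variable [Finite V]

theorem card_le_maxKEndedOrder (hT : IsRootedTree G W c p h) {k : ℕ} {Q : Finset V}
    (hQ : Q.card ≤ k)
    (hchild : ∀ x ∈ W, x ∉ Q → x ≠ c → ∃ w, IsChild W c p w x)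
    (hroot : ∃ w w', w ≠ w' ∧ IsChild W c p w c ∧ IsChild W c p w' c) :
    W.card ≤ maxKEndedOrder G k := by
  have htree : hT.subgraph.coe.IsTree := hT.subgraph_connected.isTree_coe <| by
    have := hT.ncard_edgeSet_subgraph_add_one_le
    rwa [show hT.subgraph.verts = (W : Set V) from rfl, Set.ncard_coe_finset]
  have hsub : {v : V | v ∈ hT.subgraph.verts ∧ (hT.subgraph.neighborSet v).ncard = 1} ⊆ Q := by
    rintro x ⟨hx, hx1⟩
    by_contra hxQ
    obtain ⟨y, hy⟩ := Set.ncard_eq_one.1 hx1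
    have huniq : ∀ z, hT.subgraph.Adj x z → z = y := fun z hz ↦ by
      have : z ∈ hT.subgraph.neighborSet x := hz
      rwa [hy] at this
    by_cases hxc : x = c
    · subst hxc
      obtain ⟨w, w', hne, hw, hw'⟩ := hroot
      exact hne ((huniq w (Or.inr hw)).trans (huniq w' (Or.inr hw')).symm)
    · obtain ⟨w, hw⟩ := hchild x hx hxQ hxc
      have h1 := huniq w (Or.inr hw)
      have h2 := huniq (p x) (Or.inl ⟨hx, hxc, rfl⟩)
      refine hT.not_below_parent hw.1 hw.2.1 ?_
      rw [hw.2.2]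
      refine .step ?_
      rw [h2, ← h1]
      exact .refl
  have hle := IsKEndedTree.ncard_verts_le (k := k) (H := hT.subgraph) <| Or.inl ⟨htree, by
    have := Set.ncard_le_ncard hsub (Finset.finite_toSet _)
    rw [Set.ncard_coe_finset] at this
    exact this.trans hQ⟩
  rwa [show hT.subgraph.verts = (W : Set V) from rfl, Set.ncard_coe_finset] at hle

theorem card_le_maxKEndedOrder_of_adj (hT : IsRootedTree G W c p h) {k : ℕ} {Q : Finset V}
    {a b : V} (ha : a ∈ W) (hb : b ∈ W) (hab : G.Adj a b) (hpa : p a ≠ b) (hpb : p b ≠ a)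
    (hQ : Q.card + 1 ≤ k)
    (hchild : ∀ x ∈ W, x ∉ Q → x ≠ c → x ≠ a → x ≠ b → ∃ w, IsChild W c p w x)
    (hroot : ∃ w w', w ≠ w' ∧ IsChild W c p w c ∧ IsChild W c p w' c) :
    W.card ≤ maxKEndedOrder G k := by
  obtain ⟨k, rfl⟩ := Nat.exists_eq_add_of_le' (show 1 ≤ k by omega)
  set H := hT.subgraph ⊔ G.subgraphOfAdj hab with hH
  have hverts : H.verts = (W : Set V) := by
    have : hT.subgraph.verts = (W : Set V) := rfl
    rw [hH, Subgraph.verts_sup, this, subgraphOfAdj_verts]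
    exact Set.union_eq_left.2 (by rintro x (rfl | rfl) <;> assumption)
  have hle : hT.subgraph ≤ H := le_sup_left
  have hadj : ∀ x y, IsChild W c p x y → H.Adj x y := fun x y hxy ↦ hle.2 (Or.inl hxy)
  have hHab : H.Adj a b := Or.inr (by simp)
  have hconn : H.Connected := hT.subgraph_connected.mono hle hverts.symm
  have hedge : H.edgeSet.ncard ≤ H.verts.ncard := by
    rw [hverts, Set.ncard_coe_finset, hH, Subgraph.edgeSet_sup, edgeSet_subgraphOfAdj]
    have h1 := Set.ncard_union_le hT.subgraph.edgeSet {s(a, b)}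
    have h2 := hT.ncard_edgeSet_subgraph_add_one_le
    rw [Set.ncard_singleton] at h1
    omega
  have hsub : {v : V | v ∈ H.verts ∧ (H.neighborSet v).ncard = 1} ⊆ Q := by
    rintro x ⟨hx, hx1⟩
    rw [hverts] at hx
    by_contra hxQ
    obtain ⟨y, hy⟩ := Set.ncard_eq_one.1 hx1
    have huniq : ∀ z, H.Adj x z → z = y := fun z hz ↦ by
      have : z ∈ H.neighborSet x := hz
      rwa [hy] at this
    by_cases hxc : x = c
    · subst hxc
      obtain ⟨w, w', hne, hw, hw'⟩ := hroot
      exact hne ((huniq w (hadj _ _ hw).symm).trans (huniq w' (hadj _ _ hw').symm).symm)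
    have h2 := huniq (p x) (hadj _ _ ⟨hx, hxc, rfl⟩)
    by_cases hxa : x = a
    · subst hxa
      exact hpa (h2.trans (huniq b hHab).symm)
    by_cases hxb : x = b
    · subst hxb
      exact hpb (h2.trans (huniq a hHab.symm).symm)
    obtain ⟨w, hw⟩ := hchild x hx hxQ hxc hxa hxb
    have h1 := huniq w (hadj _ _ hw).symm
    refine hT.not_below_parent hw.1 hw.2.1 ?_
    rw [hw.2.2]
    refine .step ?_
    rw [h2, ← h1]
    exact .refl
  have := Set.ncard_le_ncard hsub (Finset.finite_toSet _)
  rw [Set.ncard_coe_finset] at this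
  have hfin := hconn.ncard_verts_le hedge (this.trans (Nat.le_of_succ_le_succ hQ))
  rwa [hverts, Set.ncard_coe_finset] at hfin

end IsRootedTree

namespace IsRootedTree

variable {G : SimpleGraph V} {W : Finset V} {c : V} {p : V → V} {h : V → ℕ}

theorem restrict (hT : IsRootedTree G W c p h) {W' : Finset V} (hW' : W' ⊆ W) (hc : c ∈ W')
    (hclosed : ∀ x ∈ W', p x ∈ W') : IsRootedTree G W' c p h where
  root_mem := hc
  parent_root := hT.parent_root
  parent_mem := hclosed
  adj_parent x hx := hT.adj_parent x (hW' hx)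
  height_lt x hx := hT.height_lt x (hW' hx)

/-- Detaching the subtree at `x` from the parent of `x` and attaching it to a vertex `v` outside
this subtree gives a rooted tree. -/
theorem exists_update [DecidableEq V] (hT : IsRootedTree G W c p h) {x v : V} (hxc : x ≠ c)
    (hv : v ∈ W) (hnb : ¬ Below p x v) (hadj : G.Adj x v) :
    ∃ h', IsRootedTree G W c (Function.update p x v) h' := by
  classical
  refine ⟨fun w ↦ if Below p x w then h w + h v + 1 else h w, hT.root_mem, ?_, ?_, ?_, ?_⟩
  · rw [Function.update_of_ne hxc.symm, hT.parent_root]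
  · intro w hw
    by_cases hwx : w = x
    · subst hwx; simpa using hv
    · rw [Function.update_of_ne hwx]; exact hT.parent_mem w hw
  · intro w hw hwc
    by_cases hwx : w = x
    · subst hwx; simpa using hadj
    · rw [Function.update_of_ne hwx]; exact hT.adj_parent w hw hwc
  · intro w hw hwc
    by_cases hwx : w = x
    · subst hwx
      simp only [Function.update_self, if_neg hnb, if_pos Below.refl]
      omega
    · have hlt := hT.height_lt w hw hwc
      have hiff : Below p x (p w) ↔ Below p x w := ⟨.step, fun hb ↦ hb.parent hwx⟩
      simp only [Function.update_of_ne hwx, hiff]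
      split_ifs <;> omega

/-- Attaching a new vertex to a vertex of a rooted tree gives a rooted tree. -/
theorem exists_insert [DecidableEq V] (hT : IsRootedTree G W c p h) {x v : V} (hx : x ∉ W)
    (hv : v ∈ W) (hadj : G.Adj x v) :
    ∃ h', IsRootedTree G (insert x W) c (Function.update p x v) h' := by
  have hne : ∀ w ∈ W, w ≠ x := fun w hw hwx ↦ hx (hwx ▸ hw)
  refine ⟨Function.update h x (h v + 1), Finset.mem_insert_of_mem hT.root_mem, ?_, ?_, ?_, ?_⟩
  · rw [Function.update_of_ne (hne c hT.root_mem), hT.parent_root]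
  all_goals
    intro w hw
    obtain rfl | hw := Finset.mem_insert.1 hw
  · simpa using Or.inr hv
  · rw [Function.update_of_ne (hne w hw)]
    exact Finset.mem_insert_of_mem (hT.parent_mem w hw)
  · simpa using fun _ ↦ hadj
  · rw [Function.update_of_ne (hne w hw)]
    exact hT.adj_parent w hw
  · simp [Function.update_of_ne (hne v hv)]
  · rw [Function.update_of_ne (hne w hw), Function.update_of_ne (hne w hw),
      Function.update_of_ne (hne _ (hT.parent_mem w hw))]
    exact hT.height_lt w hw

end IsRootedTree

/-- A largest `(k + 1)`-ended tree with set of leaves `S`, rooted at a branch vertex, in a graph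
all of whose `k`-ended trees are smaller by at least `l`. -/
structure IsExtremalTree (G : SimpleGraph V) (k l : ℕ) (W : Finset V) (c : V) (p : V → V)
    (h : V → ℕ) (S : Finset V) : Prop extends IsRootedTree G W c p h where
  leaf_mem : S ⊆ W
  root_notMem : c ∉ S
  not_isChild_leaf : ∀ s ∈ S, ∀ w, ¬ IsChild W c p w s
  exists_isChild : ∀ x ∈ W, x ∉ S → x ≠ c → ∃ w, IsChild W c p w x
  exists_isChild_root : ∀ u, ∃ w w', w ≠ w' ∧ w ≠ u ∧ w' ≠ u ∧
    IsChild W c p w c ∧ IsChild W c p w' c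
  card_leaves : S.card = k + 1
  two_le : 2 ≤ l
  gap : maxKEndedOrder G k + l ≤ W.card
  maximal : maxKEndedOrder G (k + 1) ≤ W.card

namespace IsExtremalTree

variable {G : SimpleGraph V} {k l : ℕ} {W : Finset V} {c : V} {p : V → V} {h : V → ℕ} {S : Finset V}

theorem leaf_ne_root (hT : IsExtremalTree G k l W c p h S) {s : V} (hs : s ∈ S) : s ≠ c :=
  fun hsc ↦ hT.root_notMem (hsc ▸ hs)

theorem parent_ne_leaf (hT : IsExtremalTree G k l W c p h S) {s w : V} (hs : s ∈ S) (hw : w ∈ W) :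
    p w ≠ s := by
  intro hws
  by_cases hwc : w = c
  · subst hwc
    exact hT.leaf_ne_root hs (hws.symm.trans hT.parent_root)
  · exact hT.not_isChild_leaf s hs w ⟨hw, hwc, hws⟩

variable [Finite V] [DecidableEq V]

theorem mem_of_adj_leaf (hT : IsExtremalTree G k l W c p h S) {s x : V} (hs : s ∈ S)
    (hadj : G.Adj s x) : x ∈ W := by
  by_contra hx
  obtain ⟨h', hT'⟩ := hT.exists_insert hx (hT.leaf_mem hs) hadj.symm
  have hne : ∀ w ∈ W, w ≠ x := fun w hw hwx ↦ hx (hwx ▸ hw)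
  have hch : ∀ w y, IsChild W c p w y → IsChild (insert x W) c (Function.update p x s) w y :=
    fun w y ⟨hw, hwc, hwy⟩ ↦ ⟨Finset.mem_insert_of_mem hw, hwc, by
      rwa [Function.update_of_ne (hne w hw)]⟩
  have hle := hT'.card_le_maxKEndedOrder (k := k + 1) (Q := insert x (S.erase s)) ?_ ?_ ?_
  · rw [Finset.card_insert_of_notMem hx] at hle
    have := hT.maximal
    omega
  · refine (Finset.card_insert_le _ _).trans ?_
    rw [Finset.card_erase_of_mem hs, hT.card_leaves]
    rfl
  · intro y hy hyQ hyc
    simp only [Finset.mem_insert, Finset.mem_erase, not_or, not_and] at hy hyQ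
    by_cases hys : y = s
    · subst hys
      exact ⟨x, Finset.mem_insert_self _ _, (hne c hT.root_mem).symm, by simp⟩
    · obtain ⟨w, hw⟩ := hT.exists_isChild y (hy.resolve_left hyQ.1) (hyQ.2 hys) hyc
      exact ⟨w, hch w y hw⟩
  · obtain ⟨w, w', hww, -, -, hw, hw'⟩ := hT.exists_isChild_root c
    exact ⟨w, w', hww, hch _ _ hw, hch _ _ hw'⟩

theorem eq_of_isChild_parent (hT : IsExtremalTree G k l W c p h S) {s x w : V} (hs : s ∈ S)
    (hxc : x ≠ c) (hadj : G.Adj s x) (hnb : ¬ Below p x s) (hw : IsChild W c p w (p x)) :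
    w = x := by
  by_contra hwx
  have hx := hT.mem_of_adj_leaf hs hadj
  obtain ⟨h', hT'⟩ := hT.exists_update hxc (hT.leaf_mem hs) hnb hadj.symm
  have hch : ∀ w y, IsChild W c p w y → w ≠ x → IsChild W c (Function.update p x s) w y :=
    fun w y ⟨hw, hwc, hwy⟩ hwx ↦ ⟨hw, hwc, by rwa [Function.update_of_ne hwx]⟩
  have hle := hT'.card_le_maxKEndedOrder (k := k) (Q := S.erase s) ?_ ?_ ?_
  · have := hT.gap
    have := hT.two_le
    omega
  · rw [Finset.card_erase_of_mem hs, hT.card_leaves]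
    rfl
  · intro y hy hyQ hyc
    by_cases hys : y = s
    · subst hys
      exact ⟨x, hx, hxc, by simp⟩
    obtain ⟨z, hz⟩ := hT.exists_isChild y hy (fun hyS ↦ hyQ (Finset.mem_erase.2 ⟨hys, hyS⟩)) hyc
    by_cases hzx : z = x
    · subst hzx
      exact ⟨w, hch _ _ (hz.2.2 ▸ hw) hwx⟩
    · exact ⟨z, hch _ _ hz hzx⟩
  · obtain ⟨w, w', hww, hwx, hwx', hw, hw'⟩ := hT.exists_isChild_root x
    exact ⟨w, w', hww, hch _ _ hw hwx, hch _ _ hw' hwx'⟩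

theorem parent_ne_root (hT : IsExtremalTree G k l W c p h S) {s x : V} (hs : s ∈ S)
    (hxc : x ≠ c) (hadj : G.Adj s x) (hnb : ¬ Below p x s) : p x ≠ c := by
  intro hpx
  obtain ⟨w, -, -, hwx, -, hw, -⟩ := hT.exists_isChild_root x
  exact hwx (hT.eq_of_isChild_parent hs hxc hadj hnb (hpx.symm ▸ hw))

/-- The tree obtained by deleting the parent of `x`, whose only child is `x`, and attaching `x` to
an adjacent leaf. -/
theorem exists_erase_parent (hT : IsExtremalTree G k l W c p h S) {s x : V} (hs : s ∈ S)
    (hxc : x ≠ c) (hadj : G.Adj s x) (hnb : ¬ Below p x s) :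
    ∃ h', IsRootedTree G (W.erase (p x)) c (Function.update p x s) h' := by
  obtain ⟨h', hT'⟩ := hT.exists_update hxc (hT.leaf_mem hs) hnb hadj.symm
  have hx := hT.mem_of_adj_leaf hs hadj
  refine ⟨h', hT'.restrict (Finset.erase_subset _ _) (Finset.mem_erase.2
    ⟨(hT.parent_ne_root hs hxc hadj hnb).symm, hT.root_mem⟩) fun y hy ↦ ?_⟩
  rw [Finset.mem_erase] at hy ⊢
  refine ⟨?_, hT'.parent_mem y hy.2⟩
  by_cases hyx : y = x
  · subst hyx
    simpa using (hT.parent_ne_leaf hs hx).symm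
  rw [Function.update_of_ne hyx]
  intro hpy
  by_cases hyc : y = c
  · subst hyc
    exact hy.1 (hT.parent_root.symm.trans hpy)
  · exact hyx (hT.eq_of_isChild_parent hs hxc hadj hnb ⟨hy.2, hyc, hpy⟩)

theorem eq_of_isChild_parent_parent (hT : IsExtremalTree G k l W c p h S) {s x w : V} (hs : s ∈ S)
    (hxc : x ≠ c) (hadj : G.Adj s x) (hnb : ¬ Below p x s) (hw : IsChild W c p w (p (p x))) :
    w = p x := by
  by_contra hwy
  have hx := hT.mem_of_adj_leaf hs hadj
  have hyc := hT.parent_ne_root hs hxc hadj hnb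
  have hyW := hT.parent_mem x hx
  obtain ⟨h', hT'⟩ := hT.exists_erase_parent hs hxc hadj hnb
  have hxy : x ≠ p x := (hT.parent_ne hx hxc).symm
  have hch : ∀ w y, IsChild W c p w y → w ≠ x → w ≠ p x →
      IsChild (W.erase (p x)) c (Function.update p x s) w y :=
    fun w y ⟨hw, hwc, hwy⟩ hwx hwy' ↦
      ⟨Finset.mem_erase.2 ⟨hwy', hw⟩, hwc, by rwa [Function.update_of_ne hwx]⟩
  have hle := hT'.card_le_maxKEndedOrder (k := k) (Q := S.erase s) ?_ ?_ ?_
  · rw [Finset.card_erase_of_mem hyW] at hle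
    have := hT.gap
    have := hT.two_le
    omega
  · rw [Finset.card_erase_of_mem hs, hT.card_leaves]
    rfl
  · intro y hy hyQ hyc
    rw [Finset.mem_erase] at hy
    by_cases hys : y = s
    · subst hys
      exact ⟨x, Finset.mem_erase.2 ⟨hxy, hx⟩, hxc, by simp⟩
    obtain ⟨z, hz⟩ := hT.exists_isChild y hy.2 (fun hyS ↦ hyQ (Finset.mem_erase.2 ⟨hys, hyS⟩)) hyc
    have hzx : z ≠ x := by
      rintro rfl
      exact hy.1 hz.2.2.symm
    by_cases hzy : z = p x
    · subst hzy
      refine ⟨w, hch _ _ (hz.2.2 ▸ hw) ?_ hwy⟩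
      rintro rfl
      exact hy.1 (hz.2.2.symm.trans hw.2.2.symm)
    · exact ⟨z, hch _ _ hz hzx hzy⟩
  · have hne : ∀ w, IsChild W c p w c → w ≠ x := by
      rintro _ hz rfl
      exact hyc hz.2.2
    obtain ⟨w, w', hww, hwx, hwx', hw, hw'⟩ := hT.exists_isChild_root (p x)
    exact ⟨w, w', hww, hch _ _ hw (hne _ hw) hwx, hch _ _ hw' (hne _ hw') hwx'⟩

theorem parent_parent_ne_root (hT : IsExtremalTree G k l W c p h S) {s x : V} (hs : s ∈ S)
    (hxc : x ≠ c) (hadj : G.Adj s x) (hnb : ¬ Below p x s) : p (p x) ≠ c := by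
  intro hpx
  obtain ⟨w, -, -, hwx, -, hw, -⟩ := hT.exists_isChild_root (p x)
  exact hwx (hT.eq_of_isChild_parent_parent hs hxc hadj hnb (hpx.symm ▸ hw))

open scoped Classical in
/-- A top vertex `u` of a pendant path with at most `l` vertices and leaf `s` is not adjacent to
other leaves. -/
theorem not_adj_of_card_filter_below_le (hT : IsExtremalTree G k l W c p h S) {s t u : V}
    (hs : s ∈ S) (ht : t ∈ S) (hts : t ≠ s) (hu : u ∈ W) (huc : u ≠ c)
    (hleaf : ∀ x ∈ S, Below p u x → x = s) (hbelow : Below p u s)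
    (hcard : (W.filter (Below p u)).card ≤ l) : ¬ G.Adj t u := by
  intro hadj
  set W' := W.filter fun x ↦ Below p u x → x = u
  have hmem : ∀ x, x ∈ W' ↔ x ∈ W ∧ (Below p u x → x = u) := fun x ↦ Finset.mem_filter
  have hcW' : c ∈ W' := (hmem c).2 ⟨hT.root_mem, fun hb ↦ absurd hb (hT.not_below_root huc)⟩
  have hT' : IsRootedTree G W' c p h := hT.restrict (Finset.filter_subset _ _) hcW' fun x hx ↦ by
    rw [hmem] at hx ⊢
    refine ⟨hT.parent_mem x hx.1, fun hb ↦ ?_⟩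
    obtain rfl := hx.2 (.step hb)
    exact absurd hb (hT.not_below_parent hu huc)
  have htu : ¬ Below p u t := fun hb ↦ hts (hleaf t ht hb)
  have hle := hT'.card_le_maxKEndedOrder_of_adj (k := k) (Q := (S.erase s).erase t)
    ((hmem t).2 ⟨hT.leaf_mem ht, fun hb ↦ absurd hb htu⟩) ((hmem u).2 ⟨hu, fun _ ↦ rfl⟩) hadj
    (fun hpt ↦ htu (.step (hpt ▸ .refl))) (hT.parent_ne_leaf ht hu) ?_ ?_ ?_
  · have hunion : W.card ≤ W'.card + ((W.filter (Below p u)).erase u).card := by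
      refine (Finset.card_le_card fun x hx ↦ ?_).trans (Finset.card_union_le _ _)
      simp only [Finset.mem_union, hmem, Finset.mem_erase, Finset.mem_filter]
      tauto
    have huD : u ∈ W.filter (Below p u) := Finset.mem_filter.2 ⟨hu, .refl⟩
    have hpos := Finset.card_pos.2 ⟨u, huD⟩
    rw [Finset.card_erase_of_mem huD] at hunion
    have := hT.gap
    omega
  · have hk := hT.card_leaves
    have h2 : 1 < S.card := Finset.one_lt_card.2 ⟨t, ht, s, hs, hts⟩
    rw [Finset.card_erase_of_mem (Finset.mem_erase.2 ⟨hts, ht⟩), Finset.card_erase_of_mem hs]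
    omega
  · intro x hx hxQ hxc hxt hxu
    rw [hmem] at hx
    have hxb : ¬ Below p u x := fun hb ↦ hxu (hx.2 hb)
    have hxS : x ∉ S := fun hxS ↦ hxQ <| Finset.mem_erase.2
      ⟨hxt, Finset.mem_erase.2 ⟨fun hxs ↦ hxb (hxs ▸ hbelow), hxS⟩⟩
    obtain ⟨w, hw⟩ := hT.exists_isChild x hx.1 hxS hxc
    refine ⟨w, (hmem w).2 ⟨hw.1, fun hb ↦ ?_⟩, hw.2⟩
    by_contra hwu
    exact hxb (hw.2.2 ▸ hb.parent hwu)
  · obtain ⟨w, w', hww, -, -, hw, hw'⟩ := hT.exists_isChild_root c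
    have key : ∀ z, IsChild W c p z c → IsChild W' c p z c := fun z hz ↦
      ⟨(hmem z).2 ⟨hz.1, fun hb ↦ by_contra fun hzu ↦
        hT.not_below_root huc (hz.2.2 ▸ hb.parent hzu)⟩, hz.2⟩
    exact ⟨w, w', hww, key w hw, key w' hw'⟩

open scoped Classical in
/-- The top vertex of a pendant path with fewer than `l` vertices is the only child of its
parent. -/
theorem eq_of_isChild_parent_of_card_lt (hT : IsExtremalTree G k l W c p h S) {s u w : V}
    (hs : s ∈ S) (hu : u ∈ W) (huc : u ≠ c) (hbelow : Below p u s)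
    (hcard : (W.filter (Below p u)).card < l) (hw : IsChild W c p w (p u)) : w = u := by
  by_contra hwu
  set W' := W.filter fun x ↦ ¬ Below p u x
  have hmem : ∀ x, x ∈ W' ↔ x ∈ W ∧ ¬ Below p u x := fun x ↦ Finset.mem_filter
  have hT' : IsRootedTree G W' c p h := hT.restrict (Finset.filter_subset _ _)
    ((hmem c).2 ⟨hT.root_mem, hT.not_below_root huc⟩) fun x hx ↦ by
      rw [hmem] at hx ⊢
      exact ⟨hT.parent_mem x hx.1, fun hb ↦ hx.2 (.step hb)⟩
  have key : ∀ z x, ¬ Below p u x → z ≠ u → IsChild W c p z x → IsChild W' c p z x :=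
    fun z x hx hzu hz ↦ ⟨(hmem z).2 ⟨hz.1, fun hb ↦ hx (hz.2.2 ▸ hb.parent hzu)⟩, hz.2⟩
  have hle := hT'.card_le_maxKEndedOrder (k := k) (Q := S.erase s) ?_ ?_ ?_
  · have hunion : W.card ≤ W'.card + (W.filter (Below p u)).card := by
      refine (Finset.card_le_card fun x hx ↦ ?_).trans (Finset.card_union_le _ _)
      simp only [Finset.mem_union, hmem, Finset.mem_filter]
      tauto
    have := hT.gap
    omega
  · rw [Finset.card_erase_of_mem hs, hT.card_leaves]
    rfl
  · intro x hx hxQ hxc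
    rw [hmem] at hx
    have hxS : x ∉ S := fun hxS ↦ hxQ <| Finset.mem_erase.2 ⟨fun hxs ↦ hx.2 (hxs ▸ hbelow), hxS⟩
    obtain ⟨z, hz⟩ := hT.exists_isChild x hx.1 hxS hxc
    by_cases hzu : z = u
    · subst hzu
      exact ⟨w, key w x hx.2 hwu (hz.2.2 ▸ hw)⟩
    · exact ⟨z, key z x hx.2 hzu hz⟩
  · obtain ⟨z, z', hzz, hzu, hzu', hz, hz'⟩ := hT.exists_isChild_root u
    exact ⟨z, z', hzz, key _ _ (hT.not_below_root huc) hzu hz,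
      key _ _ (hT.not_below_root huc) hzu' hz'⟩

open scoped Classical in
/-- Every leaf is the end of a pendant path with a prescribed number `i + 1 ≤ l` of vertices. -/
theorem exists_pendant_path (hT : IsExtremalTree G k l W c p h S) {s : V} (hs : s ∈ S) (i : ℕ)
    (hi : i < l) : ∃ u ∈ W, u ≠ c ∧ Below p u s ∧ (W.filter (Below p u)).card = i + 1 ∧
      (∀ x ∈ S, Below p u x → x = s) ∧
      ∀ x ∈ W, Below p u x → ∀ t ∈ S, t ≠ s → ¬ G.Adj t x := by
  induction i with
  | zero =>
    have hbs : ∀ x ∈ W, Below p s x → x = s := by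
      intro x hx hb
      by_contra hxs
      obtain ⟨z, hz, -⟩ := hT.exists_isChild_below hx hb hxs
      exact hT.not_isChild_leaf s hs z hz
    have hcard : (W.filter (Below p s)).card = 1 := by
      refine Finset.card_eq_one.2 ⟨s, Finset.ext fun x ↦ ?_⟩
      simp only [Finset.mem_filter, Finset.mem_singleton]
      refine ⟨fun hx ↦ hbs x hx.1 hx.2, ?_⟩
      rintro rfl
      exact ⟨hT.leaf_mem hs, .refl⟩
    refine ⟨s, hT.leaf_mem hs, hT.leaf_ne_root hs, .refl, hcard,
      fun x hx ↦ hbs x (hT.leaf_mem hx), fun x hx hb t ht hts ↦ ?_⟩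
    obtain rfl := hbs x hx hb
    exact hT.not_adj_of_card_filter_below_le hs ht hts hx (hT.leaf_ne_root hs)
      (fun y hy ↦ hbs y (hT.leaf_mem hy)) .refl (by omega)
  | succ i ih =>
    obtain ⟨u, hu, huc, hus, hcard, hleaf, hadj⟩ := ih (by omega)
    have honly : ∀ w, IsChild W c p w (p u) → w = u := fun w ↦
      hT.eq_of_isChild_parent_of_card_lt hs hu huc hus (by omega)
    have hpc : p u ≠ c := by
      intro hpc
      obtain ⟨w, -, -, hwu, -, hw, -⟩ := hT.exists_isChild_root u
      exact hwu (honly w (hpc.symm ▸ hw))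
    have hpW := hT.parent_mem u hu
    have hbp : ∀ x ∈ W, Below p (p u) x → x = p u ∨ Below p u x := by
      intro x hx hb
      by_cases hxp : x = p u
      · exact Or.inl hxp
      · obtain ⟨z, hz, hzb⟩ := hT.exists_isChild_below hx hb hxp
        exact Or.inr (honly z hz ▸ hzb)
    have hpu : Below p (p u) u := .step .refl
    have hcard' : (W.filter (Below p (p u))).card = i + 1 + 1 := by
      rw [← hcard, ← Finset.card_insert_of_notMem (a := p u)]
      · congr 1
        ext x
        simp only [Finset.mem_filter, Finset.mem_insert]
        constructor
        · rintro ⟨hx, hb⟩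
          exact (hbp x hx hb).imp_right fun hb ↦ ⟨hx, hb⟩
        · rintro (rfl | ⟨hx, hb⟩)
          · exact ⟨hpW, .refl⟩
          · exact ⟨hx, hpu.trans hb⟩
      · simp only [Finset.mem_filter, not_and]
        exact fun _ ↦ hT.not_below_parent hu huc
    have hleaf' : ∀ x ∈ S, Below p (p u) x → x = s := by
      intro x hx hb
      rcases hbp x (hT.leaf_mem hx) hb with rfl | hb
      · exact absurd rfl (hT.parent_ne_leaf hx hu)
      · exact hleaf x hx hb
    refine ⟨p u, hpW, hpc, hpu.trans hus, hcard', hleaf', fun x hx hb t ht hts ↦ ?_⟩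
    rcases hbp x hx hb with rfl | hb
    · exact hT.not_adj_of_card_filter_below_le hs ht hts hpW hpc hleaf' (hpu.trans hus) (by omega)
    · exact hadj x hx hb t ht hts

theorem not_adj_leaves (hT : IsExtremalTree G k l W c p h S) {s t : V} (hs : s ∈ S) (ht : t ∈ S) :
    ¬ G.Adj t s := by
  intro hadj
  obtain ⟨u, -, -, hus, -, -, hu⟩ := hT.exists_pendant_path hs 0 (by have := hT.two_le; omega)
  exact hu s (hT.leaf_mem hs) hus t ht hadj.ne hadj

theorem not_adj_parent (hT : IsExtremalTree G k l W c p h S) {s t x : V} (hs : s ∈ S) (ht : t ∈ S)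
    (hts : t ≠ s) (hxc : x ≠ c) (hadj : G.Adj s x) (hnb : ¬ Below p x s) : ¬ G.Adj t (p x) := by
  intro htx
  have hx := hT.mem_of_adj_leaf hs hadj
  have hxS : x ∉ S := fun hxS ↦ hT.not_adj_leaves hxS hs hadj
  have honly : ∀ w, IsChild W c p w (p x) → w = x := fun w ↦
    hT.eq_of_isChild_parent hs hxc hadj hnb
  have hpx := hT.parent_ne hx hxc
  have htne : t ≠ x := fun htx ↦ hxS (htx ▸ ht)
  obtain ⟨h', hT'⟩ := hT.exists_update hxc (hT.leaf_mem hs) hnb hadj.symm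
  have hch : ∀ w y, IsChild W c p w y → w ≠ x → IsChild W c (Function.update p x s) w y :=
    fun w y ⟨hw, hwc, hwy⟩ hwx ↦ ⟨hw, hwc, by rwa [Function.update_of_ne hwx]⟩
  have hle := hT'.card_le_maxKEndedOrder_of_adj (k := k) (Q := (S.erase s).erase t)
    (hT.leaf_mem ht) (hT.parent_mem x hx) htx ?_ ?_ ?_ ?_ ?_
  · have := hT.gap
    have := hT.two_le
    omega
  · rw [Function.update_of_ne htne]
    exact fun hpt ↦ htne (honly t ⟨hT.leaf_mem ht, hT.leaf_ne_root ht, hpt⟩)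
  · rw [Function.update_of_ne hpx]
    exact hT.parent_ne_leaf ht (hT.parent_mem x hx)
  · have hk := hT.card_leaves
    have h2 : 1 < S.card := Finset.one_lt_card.2 ⟨t, ht, s, hs, hts⟩
    rw [Finset.card_erase_of_mem (Finset.mem_erase.2 ⟨hts, ht⟩), Finset.card_erase_of_mem hs]
    omega
  · intro y hy hyQ hyc hyt hyp
    by_cases hys : y = s
    · subst hys
      exact ⟨x, hx, hxc, by simp⟩
    have hyS : y ∉ S := fun hyS ↦ hyQ (Finset.mem_erase.2 ⟨hyt, Finset.mem_erase.2 ⟨hys, hyS⟩⟩)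
    obtain ⟨z, hz⟩ := hT.exists_isChild y hy hyS hyc
    refine ⟨z, hch z y hz ?_⟩
    rintro rfl
    exact hyp hz.2.2.symm
  · obtain ⟨w, w', hww, hwx, hwx', hw, hw'⟩ := hT.exists_isChild_root x
    exact ⟨w, w', hww, hch _ _ hw hwx, hch _ _ hw' hwx'⟩

theorem not_adj_parent_parent (hT : IsExtremalTree G k l W c p h S) {s t x : V} (hs : s ∈ S)
    (ht : t ∈ S) (hts : t ≠ s) (hxc : x ≠ c) (hadj : G.Adj s x) (hnb : ¬ Below p x s) :
    ¬ G.Adj t (p (p x)) := by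
  intro htx
  have hx := hT.mem_of_adj_leaf hs hadj
  have hxS : x ∉ S := fun hxS ↦ hT.not_adj_leaves hxS hs hadj
  have hyW := hT.parent_mem x hx
  have hyc := hT.parent_ne_root hs hxc hadj hnb
  have hyS : p x ∉ S := fun hyS ↦ hT.parent_ne_leaf hyS hx rfl
  have htne : t ≠ x := fun htx ↦ hxS (htx ▸ ht)
  have hpx := hT.parent_ne hx hxc
  have hzx : p (p x) ≠ x := fun hzx ↦
    hT.not_below_parent hx hxc (.step (by rw [hzx]; exact .refl))
  obtain ⟨h', hT'⟩ := hT.exists_erase_parent hs hxc hadj hnb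
  have hch : ∀ w y, IsChild W c p w y → w ≠ x → w ≠ p x →
      IsChild (W.erase (p x)) c (Function.update p x s) w y :=
    fun w y ⟨hw, hwc, hwy⟩ hwx hwy' ↦
      ⟨Finset.mem_erase.2 ⟨hwy', hw⟩, hwc, by rwa [Function.update_of_ne hwx]⟩
  have hle := hT'.card_le_maxKEndedOrder_of_adj (k := k) (Q := (S.erase s).erase t)
    (Finset.mem_erase.2 ⟨fun hty ↦ hyS (hty ▸ ht), hT.leaf_mem ht⟩)
    (Finset.mem_erase.2 ⟨hT.parent_ne hyW hyc, hT.parent_mem _ hyW⟩) htx ?_ ?_ ?_ ?_ ?_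
  · rw [Finset.card_erase_of_mem hyW] at hle
    have := hT.gap
    have := hT.two_le
    omega
  · rw [Function.update_of_ne htne]
    intro hpt
    refine hyS ?_
    rw [← hT.eq_of_isChild_parent_parent hs hxc hadj hnb
      ⟨hT.leaf_mem ht, hT.leaf_ne_root ht, hpt⟩]
    exact ht
  · rw [Function.update_of_ne hzx]
    exact hT.parent_ne_leaf ht (hT.parent_mem _ hyW)
  · have hk := hT.card_leaves
    have h2 : 1 < S.card := Finset.one_lt_card.2 ⟨t, ht, s, hs, hts⟩
    rw [Finset.card_erase_of_mem (Finset.mem_erase.2 ⟨hts, ht⟩), Finset.card_erase_of_mem hs]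
    omega
  · intro y hy hyQ hyc hyt hyp
    rw [Finset.mem_erase] at hy
    by_cases hys : y = s
    · subst hys
      exact ⟨x, Finset.mem_erase.2 ⟨hpx.symm, hx⟩, hxc, by simp⟩
    have hyS : y ∉ S := fun hyS ↦ hyQ (Finset.mem_erase.2 ⟨hyt, Finset.mem_erase.2 ⟨hys, hyS⟩⟩)
    obtain ⟨z, hz⟩ := hT.exists_isChild y hy.2 hyS hyc
    refine ⟨z, hch z y hz ?_ ?_⟩
    · rintro rfl
      exact hy.1 hz.2.2.symm
    · rintro rfl
      exact hyp hz.2.2.symm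
  · have hne : ∀ w, IsChild W c p w c → w ≠ x := by
      rintro _ hz rfl
      exact hyc hz.2.2
    obtain ⟨w, w', hww, hwx, hwx', hw, hw'⟩ := hT.exists_isChild_root (p x)
    exact ⟨w, w', hww, hch _ _ hw (hne _ hw) hwx, hch _ _ hw' (hne _ hw') hwx'⟩

end IsExtremalTree

namespace IsExtremalTree

variable {G : SimpleGraph V} {k l : ℕ} {W : Finset V} {c : V} {p : V → V} {h : V → ℕ} {S : Finset V}

theorem exists_leaf_below (hT : IsExtremalTree G k l W c p h S) {x : V} (hx : x ∈ W)
    (hxc : x ≠ c) : ∃ s ∈ S, Below p x s := by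
  have hW : ∀ w ∈ W, h w ≤ W.sup h := fun w hw ↦ Finset.le_sup hw
  induction hn : W.sup h - h x using Nat.strong_induction_on generalizing x with
  | _ n ih =>
    by_cases hxS : x ∈ S
    · exact ⟨x, hxS, .refl⟩
    obtain ⟨w, hwW, hwc, rfl⟩ := hT.exists_isChild x hx hxS hxc
    have hlt := hT.height_lt w hwW hwc
    have hle := hW w hwW
    obtain ⟨s, hs, hb⟩ := ih (W.sup h - h w) (by omega) hwW hwc rfl
    exact ⟨s, hs, .trans (.step .refl) hb⟩

variable [DecidableEq V]

/-- The union `E` of disjoint pendant paths with `l` vertices, one for each leaf outside `J`,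
contains neither ancestors nor neighbours of leaves in `J`. -/
theorem exists_disjoint_pendant_paths [Finite V] (hT : IsExtremalTree G k l W c p h S)
    {J : Finset V} (hJS : J ⊆ S) (hJ : J.card = 3) :
    ∃ E ⊆ W.erase c, E.card = l * (k - 2) ∧ (∀ x ∈ W, p x ∈ E → x ∈ E) ∧
      ∀ x ∈ E, ∀ j ∈ J, ¬ Below p x j ∧ ¬ G.Adj j x := by
  classical
  have hl := hT.two_le
  have hex : ∀ q : V, ∃ u, q ∈ S → u ∈ W ∧ u ≠ c ∧ Below p u q ∧
      (W.filter (Below p u)).card = l ∧ (∀ x ∈ S, Below p u x → x = q) ∧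
      ∀ x ∈ W, Below p u x → ∀ t ∈ S, t ≠ q → ¬ G.Adj t x := by
    intro q
    by_cases hq : q ∈ S
    · obtain ⟨u, hu⟩ := hT.exists_pendant_path hq (l - 1) (by omega)
      rw [Nat.sub_add_cancel (by omega)] at hu
      exact ⟨u, fun _ ↦ hu⟩
    · exact ⟨q, fun hq' ↦ absurd hq' hq⟩
  choose u hu using hex
  have hmem : ∀ x, x ∈ (S \ J).biUnion (fun q ↦ W.filter (Below p (u q))) ↔
      ∃ q, (q ∈ S ∧ q ∉ J) ∧ x ∈ W ∧ Below p (u q) x := by simp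
  have hne : ∀ x q, q ∈ S → Below p (u q) x → x ≠ c := by
    rintro x q hq hb rfl
    exact hT.not_below_root (hu q hq).2.1 hb
  refine ⟨(S \ J).biUnion fun q ↦ W.filter (Below p (u q)), fun x hx ↦ ?_, ?_, fun x hx hpx ↦ ?_,
    fun x hx j hj ↦ ?_⟩
  · obtain ⟨q, ⟨hq, -⟩, hxW, hb⟩ := (hmem x).1 hx
    exact Finset.mem_erase.2 ⟨hne x q hq hb, hxW⟩
  · rw [Finset.card_biUnion, Finset.sum_const_nat (m := l), Finset.card_sdiff_of_subset hJS,
      hT.card_leaves, hJ, mul_comm]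
    · rfl
    · exact fun q hq ↦ (hu q (Finset.mem_sdiff.1 hq).1).2.2.2.1
    · intro q hq q' hq' hqq
      refine Finset.disjoint_left.2 fun x hx hx' ↦ hqq ?_
      rw [Finset.mem_filter] at hx hx'
      have hqS := (Finset.mem_sdiff.1 hq).1
      obtain ⟨s, hs, hb⟩ := hT.exists_leaf_below hx.1 (hne x q hqS hx.2)
      rw [← (hu q hqS).2.2.2.2.1 s hs (hx.2.trans hb),
        (hu q' (Finset.mem_sdiff.1 hq').1).2.2.2.2.1 s hs (hx'.2.trans hb)]
  · obtain ⟨q, hq, -, hb⟩ := (hmem _).1 hpx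
    exact (hmem x).2 ⟨q, hq, hx, .step hb⟩
  · obtain ⟨q, ⟨hq, hqJ⟩, hxW, hb⟩ := (hmem x).1 hx
    have hjq : j ≠ q := fun hjq ↦ hqJ (hjq ▸ hj)
    exact ⟨fun hbj ↦ hjq ((hu q hq).2.2.2.2.1 j (hJS hj) (hb.trans hbj)),
      (hu q hq).2.2.2.2.2 x hxW hb j (hJS hj) hjq⟩

/-- The main counting argument: three leaves lying below three different children of the root have
small degree sum. -/
theorem sum_degree_add_one_le [Fintype V] [DecidableRel G.Adj]
    (hT : IsExtremalTree G k l W c p h S) {J : Finset V} (hJS : J ⊆ S) (hJ : J.card = 3)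
    (hbranch : ∀ z ∈ W, z ≠ c → ∀ i ∈ J, ∀ j ∈ J, Below p z i → Below p z j → i = j) :
    ∑ j ∈ J, G.degree j + l * (k - 2) + 1 ≤ W.card := by
  classical
  obtain ⟨E, hEW, hEcard, hEp, hE⟩ := hT.exists_disjoint_pendant_paths hJS hJ
  set N : V → Finset V := fun x ↦ J.filter fun j ↦ G.Adj j x ∧ ¬ Below p x j with hN
  set A := W.filter fun z ↦ z ≠ c ∧ ∃ j ∈ J, Below p z j ∧ G.Adj j (p z) with hA
  set B : ℕ → Finset V := fun i ↦ W.filter fun x ↦ i ≤ (N x).card with hB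
  have hNmem : ∀ x j, j ∈ N x ↔ j ∈ J ∧ G.Adj j x ∧ ¬ Below p x j := fun x j ↦ by simp [hN]
  have hAmem : ∀ z, z ∈ A ↔ z ∈ W ∧ z ≠ c ∧ ∃ j ∈ J, Below p z j ∧ G.Adj j (p z) :=
    fun x ↦ by simp [hA]
  have hBmem : ∀ i x, x ∈ B i ↔ x ∈ W ∧ i ≤ (N x).card := fun i x ↦ by simp [hB]
  have hNc : ∀ x j, j ∈ N x → x ≠ c := by
    rintro x j hj rfl
    rw [hNmem] at hj
    exact hj.2.2 (hT.below_root (hT.leaf_mem (hJS hj.1)))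
  have hB1 : ∀ x ∈ B 1, ∃ j, j ∈ N x := fun x hx ↦
    Finset.card_pos.1 ((hBmem 1 x).1 hx).2
  have hB2 : ∀ x ∈ B 2, ∀ m, ∃ j ∈ N x, j ≠ m := fun x hx m ↦
    Finset.exists_mem_ne ((hBmem 2 x).1 hx).2 m
  have hB23 : B 3 ⊆ B 2 := fun x hx ↦ by
    rw [hBmem] at hx ⊢
    exact ⟨hx.1, by omega⟩
  have hB3 : ∀ x ∈ B 3, N x = J := fun x hx ↦
    Finset.eq_of_subset_of_card_le (Finset.filter_subset _ _) (hJ ▸ ((hBmem 3 x).1 hx).2)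
  have hchild : ∀ x j, j ∈ N x → ∀ w, IsChild W c p w (p x) → w = x := by
    intro x j hj w hw
    have hj' := (hNmem x j).1 hj
    exact hT.eq_of_isChild_parent (hJS hj'.1) (hNc x j hj) hj'.2.1 hj'.2.2 hw
  have hchild2 : ∀ x j, j ∈ N x → ∀ w, IsChild W c p w (p (p x)) → w = p x := by
    intro x j hj w hw
    have hj' := (hNmem x j).1 hj
    exact hT.eq_of_isChild_parent_parent (hJS hj'.1) (hNc x j hj) hj'.2.1 hj'.2.2 hw
  have hadj : ∀ x j, j ∈ N x → ∀ m ∈ J, j ≠ m → ¬ G.Adj m (p x) := by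
    intro x j hj m hm hjm
    have hj' := (hNmem x j).1 hj
    exact hT.not_adj_parent (hJS hj'.1) (hJS hm) hjm.symm (hNc x j hj) hj'.2.1 hj'.2.2
  have hadj2 : ∀ x j, j ∈ N x → ∀ m ∈ J, j ≠ m → ¬ G.Adj m (p (p x)) := by
    intro x j hj m hm hjm
    have hj' := (hNmem x j).1 hj
    exact hT.not_adj_parent_parent (hJS hj'.1) (hJS hm) hjm.symm (hNc x j hj) hj'.2.1 hj'.2.2
  have hpc : ∀ x j, j ∈ N x → p x ≠ c := by
    intro x j hj
    have hj' := (hNmem x j).1 hj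
    exact hT.parent_ne_root (hJS hj'.1) (hNc x j hj) hj'.2.1 hj'.2.2
  have hppc : ∀ x j, j ∈ N x → p (p x) ≠ c := by
    intro x j hj
    have hj' := (hNmem x j).1 hj
    exact hT.parent_parent_ne_root (hJS hj'.1) (hNc x j hj) hj'.2.1 hj'.2.2
  have hBE : ∀ x j, j ∈ N x → x ∉ E := fun x j hj hx ↦
    (hE x hx j ((hNmem x j).1 hj).1).2 ((hNmem x j).1 hj).2.1
  set C := (B 2).image p
  set D := (B 3).image (p ∘ p)
  have hCmem : ∀ z ∈ C, ∃ x ∈ B 2, x ∈ W ∧ p x = z := fun z hz ↦ by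
    obtain ⟨x, hx, rfl⟩ := Finset.mem_image.1 hz
    exact ⟨x, hx, ((hBmem 2 x).1 hx).1, rfl⟩
  have hDmem : ∀ z ∈ D, ∃ x ∈ B 3, x ∈ W ∧ p (p x) = z := fun z hz ↦ by
    obtain ⟨x, hx, rfl⟩ := Finset.mem_image.1 hz
    exact ⟨x, hx, ((hBmem 3 x).1 hx).1, rfl⟩
  have hCcard : C.card = (B 2).card := by
    refine Finset.card_image_of_injOn fun x hx y hy hxy ↦ ?_
    obtain ⟨j, hj, -⟩ := hB2 x hx c
    obtain ⟨i, hi, -⟩ := hB2 y hy c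
    exact hchild y i hi x ⟨((hBmem 2 x).1 hx).1, hNc x j hj, hxy⟩
  have hDcard : D.card = (B 3).card := by
    refine Finset.card_image_of_injOn fun x hx y hy hxy ↦ ?_
    obtain ⟨j, hj, -⟩ := hB2 x (hB23 hx) c
    obtain ⟨i, hi, -⟩ := hB2 y (hB23 hy) c
    have hxW := ((hBmem 3 x).1 hx).1
    exact hchild y i hi x ⟨hxW, hNc x j hj,
      hchild2 y i hi (p x) ⟨hT.parent_mem x hxW, hpc x j hj, hxy⟩⟩
  have hAB : Disjoint A (B 1) := Finset.disjoint_left.2 fun z hzA hzB ↦ by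
    obtain ⟨-, -, j, hj, hb, hja⟩ := (hAmem z).1 hzA
    obtain ⟨m, hm⟩ := hB1 z hzB
    exact hadj z m hm j hj (fun hmj ↦ ((hNmem z m).1 hm).2.2 (hmj ▸ hb)) hja
  have hABC : Disjoint (A ∪ B 1) C := Finset.disjoint_right.2 fun z hzC hz ↦ by
    obtain ⟨x, hx, hxW, rfl⟩ := hCmem z hzC
    rcases Finset.mem_union.1 hz with hzA | hzB
    · obtain ⟨-, -, j, hj, hb, hja⟩ := (hAmem _).1 hzA
      obtain ⟨m, hm, hmj⟩ := hB2 x hx j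
      exact hadj2 x m hm j hj hmj hja
    · obtain ⟨j, hj⟩ := hB1 _ hzB
      rw [hNmem] at hj
      obtain ⟨m, hm, hmj⟩ := hB2 x hx j
      exact hadj x m hm j hj.1 hmj hj.2.1
  have hABCD : Disjoint (A ∪ B 1 ∪ C) D := Finset.disjoint_right.2 fun z hzD hz ↦ by
    obtain ⟨x, hx, hxW, rfl⟩ := hDmem z hzD
    rcases Finset.mem_union.1 hz with hz | hzC
    · rcases Finset.mem_union.1 hz with hzA | hzB
      · obtain ⟨-, -, j, hj, hb, hja⟩ := (hAmem _).1 hzA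
        have hjN : j ∈ N x := (hB3 x hx).symm ▸ hj
        have hjW := hT.leaf_mem (hJS hj)
        obtain ⟨w, hw, hwb⟩ := hT.exists_isChild_below hjW hb
          (hT.parent_ne_leaf (hJS hj) (hT.parent_mem x hxW)).symm
        obtain rfl := hchild2 x j hjN w hw
        obtain ⟨v, hv, hvb⟩ := hT.exists_isChild_below hjW hwb
          (hT.parent_ne_leaf (hJS hj) hxW).symm
        obtain rfl := hchild x j hjN v hv
        exact ((hNmem _ j).1 hjN).2.2 hvb
      · obtain ⟨j, hj⟩ := hB1 _ hzB
        rw [hNmem] at hj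
        obtain ⟨m, hm, hmj⟩ := hB2 x (hB23 hx) j
        exact hadj2 x m hm j hj.1 hmj hj.2.1
    · obtain ⟨y, hy, hyW, hyx⟩ := hCmem _ hzC
      obtain ⟨j, hj, -⟩ := hB2 y hy c
      obtain ⟨m, hm, hmj⟩ := hB2 x (hB23 hx) j
      obtain rfl := hchild2 x m hm y ⟨hyW, hNc y j hj, hyx⟩
      rw [hNmem] at hj
      exact hadj x m hm j hj.1 hmj hj.2.1
  have hABCDE : Disjoint (A ∪ B 1 ∪ C ∪ D) E := Finset.disjoint_left.2 fun z hz hzE ↦ by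
    simp only [Finset.mem_union, or_assoc] at hz
    rcases hz with hzA | hzB | hzC | hzD
    · obtain ⟨-, -, j, hj, hb, -⟩ := (hAmem _).1 hzA
      exact (hE z hzE j hj).1 hb
    · obtain ⟨j, hj⟩ := hB1 _ hzB
      exact hBE z j hj hzE
    · obtain ⟨x, hx, hxW, rfl⟩ := hCmem _ hzC
      obtain ⟨j, hj, -⟩ := hB2 x hx c
      exact hBE x j hj (hEp x hxW hzE)
    · obtain ⟨x, hx, hxW, rfl⟩ := hDmem _ hzD
      obtain ⟨j, hj, -⟩ := hB2 x (hB23 hx) c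
      exact hBE x j hj (hEp x hxW (hEp _ (hT.parent_mem x hxW) hzE))
  have hsub : A ∪ B 1 ∪ C ∪ D ∪ E ⊆ W.erase c := fun z hz ↦ by
    simp only [Finset.mem_union, or_assoc] at hz
    rcases hz with hzA | hzB | hzC | hzD | hzE
    · exact Finset.mem_erase.2 ⟨((hAmem z).1 hzA).2.1, ((hAmem z).1 hzA).1⟩
    · obtain ⟨j, hj⟩ := hB1 _ hzB
      exact Finset.mem_erase.2 ⟨hNc z j hj, ((hBmem 1 z).1 hzB).1⟩
    · obtain ⟨x, hx, hxW, rfl⟩ := hCmem _ hzC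
      obtain ⟨j, hj, -⟩ := hB2 x hx c
      exact Finset.mem_erase.2 ⟨hpc x j hj, hT.parent_mem x hxW⟩
    · obtain ⟨x, hx, hxW, rfl⟩ := hDmem _ hzD
      obtain ⟨j, hj, -⟩ := hB2 x (hB23 hx) c
      exact Finset.mem_erase.2 ⟨hppc x j hj, hT.parent_mem _ (hT.parent_mem x hxW)⟩
    · exact hEW hzE
  have hcard := Finset.card_le_card hsub
  rw [Finset.card_union_of_disjoint hABCDE, Finset.card_union_of_disjoint hABCD,
    Finset.card_union_of_disjoint hABC, Finset.card_union_of_disjoint hAB, hCcard, hDcard, hEcard,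
    Finset.card_erase_of_mem hT.root_mem] at hcard
  have hdeg : ∑ j ∈ J, G.degree j = ∑ x ∈ W, (J.filter fun j ↦ G.Adj j x).card := by
    refine Eq.trans ?_ (Finset.sum_card_bipartiteAbove_eq_sum_card_bipartiteBelow G.Adj)
    refine Finset.sum_congr rfl fun j hj ↦ ?_
    rw [← G.card_neighborFinset_eq_degree]
    congr 1
    ext x
    simp only [mem_neighborFinset, Finset.mem_bipartiteAbove]
    exact ⟨fun hx ↦ ⟨hT.mem_of_adj_leaf (hJS hj) hx, hx⟩, fun hx ↦ hx.2⟩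
  have hNsum : ∑ x ∈ W, (N x).card ≤ (B 1).card + (B 2).card + (B 3).card := by
    simp only [hB, Finset.card_filter, ← Finset.sum_add_distrib]
    refine Finset.sum_le_sum fun x _ ↦ ?_
    have hle : (N x).card ≤ 3 := hJ ▸ Finset.card_filter_le _ _
    split_ifs <;> omega
  have hAsum : ∑ x ∈ W, (J.filter fun j ↦ G.Adj j x ∧ Below p x j).card ≤ A.card := by
    rw [Finset.card_eq_sum_card_fiberwise (f := p) (t := W)
      fun z hz ↦ hT.parent_mem z ((hAmem z).1 hz).1]
    refine Finset.sum_le_sum fun x _ ↦ ?_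
    refine Finset.card_le_card_of_forall_subsingleton (fun j z ↦ Below p z j) ?_ ?_
    · intro j hj
      obtain ⟨hjJ, hjx, hb⟩ := Finset.mem_filter.1 hj
      obtain ⟨z, ⟨hz, hzc, rfl⟩, hzb⟩ :=
        hT.exists_isChild_below (hT.leaf_mem (hJS hjJ)) hb hjx.ne
      exact ⟨z, Finset.mem_filter.2 ⟨(hAmem z).2 ⟨hz, hzc, j, hjJ, hzb, hjx⟩, rfl⟩, hzb⟩
    · rintro z hz i ⟨hi, hib⟩ j ⟨hj, hjb⟩
      have hz' := (hAmem z).1 (Finset.mem_filter.1 hz).1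
      exact hbranch z hz'.1 hz'.2.1 i (Finset.mem_filter.1 hi).1 j (Finset.mem_filter.1 hj).1
        hib hjb
  have hsplit : ∑ x ∈ W, (J.filter fun j ↦ G.Adj j x).card =
      ∑ x ∈ W, (N x).card + ∑ x ∈ W, (J.filter fun j ↦ G.Adj j x ∧ Below p x j).card := by
    rw [← Finset.sum_add_distrib]
    refine Finset.sum_congr rfl fun x _ ↦ ?_
    rw [← Finset.card_filter_add_card_filter_not (s := J.filter fun j ↦ G.Adj j x)
      fun j ↦ Below p x j, Finset.filter_filter, Finset.filter_filter, add_comm]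
  have hpos := Finset.card_pos.2 ⟨c, hT.root_mem⟩
  omega

end IsExtremalTree

/-- A finite tree has a parent map towards any given root `c`. -/
theorem SimpleGraph.IsTree.exists_isRootedTree {U : Type*} [Fintype U] {F : SimpleGraph U}
    (hF : F.IsTree) (c : U) : ∃ p, IsRootedTree F Finset.univ c p (F.dist c) ∧
      (∀ x, x ≠ c → F.dist c x = F.dist c (p x) + 1) ∧
      ∀ x y, F.Adj x y → IsChild Finset.univ c p x y ∨ IsChild Finset.univ c p y x := by
  have hex : ∀ x, ∃ y, (x = c → y = c) ∧ (x ≠ c → F.Adj x y ∧ F.dist c x = F.dist c y + 1) := by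
    intro x
    by_cases hxc : x = c
    · exact ⟨c, fun _ ↦ rfl, fun hne ↦ absurd hxc hne⟩
    obtain ⟨w, hw⟩ := hF.1.exists_walk_length_eq_dist x c
    cases w with
    | nil => exact absurd rfl hxc
    | @cons _ y _ hadj q =>
      refine ⟨y, fun hx ↦ absurd hx hxc, fun _ ↦ ⟨hadj, ?_⟩⟩
      have hq := F.dist_le q
      rw [F.dist_comm] at hq hw
      rw [Walk.length_cons] at hw
      rcases hF.dist_eq_dist_add_one_of_adj c hadj with h | h <;> omega
  choose p hpc hp using hex
  have hunique : ∀ x y, F.Adj x y → F.dist c x = F.dist c y + 1 →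
      IsChild Finset.univ c p x y := by
    intro x y hadj hdist
    have hxc : x ≠ c := by
      rintro rfl
      simp at hdist
    refine ⟨Finset.mem_univ x, hxc, ?_⟩
    have key : ∀ z, F.Adj x z → F.dist c x = F.dist c z + 1 →
        ∃ P : F.Path x c, P.1.snd = z := by
      intro z hz hd
      obtain ⟨q, hq⟩ := hF.1.exists_walk_length_eq_dist z c
      refine ⟨⟨.cons hz q, Walk.isPath_of_length_eq_dist _ ?_⟩, by simp⟩
      rw [Walk.length_cons, hq, F.dist_comm, F.dist_comm (u := x), hd]
    obtain ⟨P, rfl⟩ := key y hadj hdist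
    obtain ⟨Q, hQ⟩ := key (p x) (hp x hxc).1 (hp x hxc).2
    have := hF.2.subsingleton_path x c
    rw [← hQ, Subsingleton.elim P Q]
  refine ⟨p, ⟨Finset.mem_univ c, hpc c rfl, fun _ _ ↦ Finset.mem_univ _,
    fun x _ hx ↦ (hp x hx).1, fun x _ hx ↦ by have := (hp x hx).2; omega⟩,
    fun x hx ↦ (hp x hx).2, fun x y hadj ↦ ?_⟩
  exact (hF.dist_eq_dist_add_one_of_adj c hadj).imp (hunique x y hadj) (hunique y x hadj.symm)

/-- A finite tree can be rooted in such a way that three given vertices lie in different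
branches. -/
theorem SimpleGraph.IsTree.exists_isRootedTree_branches {U : Type*} [Fintype U]
    {F : SimpleGraph U} (hF : F.IsTree) {J : Finset U} (hJ : J.card = 3) :
    ∃ c p h, IsRootedTree F Finset.univ c p h ∧
      (∀ x y, F.Adj x y → IsChild Finset.univ c p x y ∨ IsChild Finset.univ c p y x) ∧
      ∀ z, z ≠ c → ∀ i ∈ J, ∀ j ∈ J, Below p z i → Below p z j → i = j := by
  classical
  have := hF.1.nonempty
  obtain ⟨c, hc⟩ := Finite.exists_min fun x ↦ ∑ j ∈ J, F.dist x j
  obtain ⟨p, hT, hdist, hadj⟩ := hF.exists_isRootedTree c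
  refine ⟨c, p, F.dist c, hT, hadj, fun z hzc i hi j hj hbi hbj ↦ ?_⟩
  by_contra hij
  have hbelow : ∀ w, Below p z w → F.dist z w + F.dist c z ≤ F.dist c w := by
    intro w hw
    induction hw with
    | refl => simp
    | @step w hw ih =>
      have hwc : w ≠ c := by
        rintro rfl
        exact hT.not_below_root hzc (.step hw)
      have h1 := hdist w hwc
      have h2 := hF.1.dist_triangle (u := z) (v := p w) (w := w)
      have h3 := dist_eq_one_iff_adj.2 (hT.adj_parent w (Finset.mem_univ w) hwc).symm
      omega
  have hjJ : j ∈ J.erase i := Finset.mem_erase.2 ⟨Ne.symm hij, hj⟩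
  obtain ⟨m, hm⟩ : ∃ m, (J.erase i).erase j = {m} := by
    rw [← Finset.card_eq_one, Finset.card_erase_of_mem hjJ, Finset.card_erase_of_mem hi, hJ]
  have hsum : ∀ x, ∑ t ∈ J, F.dist x t = F.dist x i + (F.dist x j + F.dist x m) := fun x ↦ by
    rw [← Finset.add_sum_erase J _ hi, ← Finset.add_sum_erase _ _ hjJ, hm, Finset.sum_singleton]
  have hle := hc z
  rw [hsum, hsum] at hle
  have h1 := hbelow i hbi
  have h2 := hbelow j hbj
  have h3 := hF.1.dist_triangle (u := z) (v := c) (w := m)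
  have h4 := hF.1.pos_dist_of_ne hzc
  rw [F.dist_comm (u := z) (v := c)] at h3 h4
  omega

/-- A subgraph that is a tree can be rooted in such a way that three given vertices lie in
different branches. -/
theorem SimpleGraph.Subgraph.exists_isRootedTree_branches [Finite V] {G : SimpleGraph V}
    {H : G.Subgraph} (hH : H.coe.IsTree) {W J : Finset V} (hW : ↑W = H.verts) (hJW : J ⊆ W)
    (hJ : J.card = 3) :
    ∃ c p h, IsRootedTree G W c p h ∧
      (∀ x y, H.Adj x y ↔ IsChild W c p x y ∨ IsChild W c p y x) ∧
      ∀ z ∈ W, z ≠ c → ∀ i ∈ J, ∀ j ∈ J, Below p z i → Below p z j → i = j := by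
  classical
  have hmem : ∀ x, x ∈ W ↔ x ∈ H.verts := fun x ↦ by rw [← hW, Finset.mem_coe]
  have := Fintype.ofFinite H.verts
  have hJ' : (J.subtype (· ∈ H.verts)).card = 3 := by
    rw [Finset.card_subtype, Finset.filter_true_of_mem fun x hx ↦ (hmem x).1 (hJW hx), hJ]
  obtain ⟨c, p, h, hT, hadj, hbr⟩ := hH.exists_isRootedTree_branches hJ'
  set p' : V → V := Function.extend Subtype.val (fun x ↦ (p x : V)) id
  have hpp : ∀ x : H.verts, p' x = p x := Subtype.val_injective.extend_apply _ _
  have hchild : ∀ x y : H.verts, IsChild Finset.univ c p x y ↔ IsChild W c p' x y := fun x y ↦ by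
    simp [IsChild, hpp, hmem, Subtype.ext_iff]
  have hbelow : ∀ z w, Below p' z w → ∀ hz : z ∈ H.verts, ∀ hw : w ∈ H.verts,
      Below p ⟨z, hz⟩ ⟨w, hw⟩ := by
    intro z w hb hz
    induction hb with
    | refl => exact fun _ ↦ .refl
    | @step w _ ih =>
      intro hw
      have hpw := hpp ⟨w, hw⟩
      refine .step ?_
      convert ih (hpw ▸ (p ⟨w, hw⟩).2) using 1
      exact Subtype.ext hpw.symm
  refine ⟨c, p', Function.extend Subtype.val h 0, ⟨(hmem _).2 c.2, ?_, fun x hx ↦ ?_,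
    fun x hx hxc ↦ ?_, fun x hx hxc ↦ ?_⟩, fun x y ↦ ⟨fun hxy ↦ ?_, ?_⟩, ?_⟩
  · rw [hpp, hT.parent_root]
  · lift x to H.verts using (hmem x).1 hx
    rw [hpp, hmem]
    exact (p x).2
  · lift x to H.verts using (hmem x).1 hx
    rw [hpp]
    exact (hT.adj_parent x (Finset.mem_univ x) fun hx ↦ hxc (congrArg _ hx)).adj_sub
  · lift x to H.verts using (hmem x).1 hx
    rw [hpp, Subtype.val_injective.extend_apply, Subtype.val_injective.extend_apply]
    exact hT.height_lt x (Finset.mem_univ x) fun hx ↦ hxc (congrArg _ hx)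
  · lift x to H.verts using H.edge_vert hxy
    lift y to H.verts using H.edge_vert hxy.symm
    rw [← hchild, ← hchild]
    exact hadj x y hxy
  · have key : ∀ x y, IsChild W c p' x y → H.Adj x y := by
      rintro x _ ⟨hx, hxc, rfl⟩
      lift x to H.verts using (hmem x).1 hx
      rw [hpp]
      exact hT.adj_parent x (Finset.mem_univ x) fun hx ↦ hxc (congrArg _ hx)
    exact fun hxy ↦ hxy.elim (key x y) fun hyx ↦ (key y x hyx).symm
  · intro z hz hzc i hi j hj hbi hbj
    have hz' := (hmem z).1 hz
    have hi' := (hmem i).1 (hJW hi)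
    have hj' := (hmem j).1 (hJW hj)
    exact congrArg Subtype.val (hbr ⟨z, hz'⟩ (fun hzc' ↦ hzc (congrArg Subtype.val hzc'))
      ⟨i, hi'⟩ (by simpa using hi) ⟨j, hj'⟩ (by simpa using hj) (hbelow z i hbi hz' hi')
      (hbelow z j hbj hz' hj'))

/-- If a largest `(k + 1)`-ended tree exceeds `k`-ended trees by at least `l` vertices, then it is
an extremal tree rooted so that three of its leaves lie in different branches. -/
theorem exists_isExtremalTree [Finite V] [Nonempty V] (G : SimpleGraph V) {k l : ℕ} (hk : 2 ≤ k)
    (hl : 2 ≤ l) (hgap : maxKEndedOrder G k + l ≤ maxKEndedOrder G (k + 1)) :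
    ∃ W c p h S, ∃ J ⊆ S, IsExtremalTree G k l W c p h S ∧ W.card = maxKEndedOrder G (k + 1) ∧
      J.card = 3 ∧
      ∀ z ∈ W, z ≠ c → ∀ i ∈ J, ∀ j ∈ J, Below p z i → Below p z j → i = j := by
  classical
  obtain ⟨H, hH, hcard⟩ := exists_isKEndedTree_ncard_verts_eq G (k := k + 1) (by omega)
  have hnot : ¬ IsKEndedTree G k H := fun hH' ↦ by
    have := hH'.ncard_verts_le
    omega
  rcases hH with ⟨htree, hends⟩ | ⟨-, hcycle⟩
  swap
  · exact absurd (Or.inr ⟨by omega, hcycle⟩) hnot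
  have hends' : endVertexCount H = k + 1 := by
    by_contra hne
    exact hnot (Or.inl ⟨htree, by omega⟩)
  have := Fintype.ofFinite V
  set W := H.verts.toFinset with hW
  set S := W.filter fun v ↦ (H.neighborSet v).ncard = 1 with hS
  have hSmem : ∀ x, x ∈ S ↔ x ∈ W ∧ (H.neighborSet x).ncard = 1 := fun x ↦ Finset.mem_filter
  have hScard : S.card = k + 1 := by
    rw [← hends', endVertexCount, ← Set.ncard_coe_finset]
    congr 1
    ext x
    simp [hS, hW]
  have hWcard : W.card = maxKEndedOrder G (k + 1) := by
    rw [← hcard, hW, Set.ncard_eq_toFinset_card']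
  obtain ⟨J, hJS, hJ⟩ := Finset.exists_subset_card_eq (s := S) (n := 3) (by omega)
  have hSW : S ⊆ W := Finset.filter_subset _ _
  obtain ⟨c, p, h, hT, hadj, hbr⟩ := Subgraph.exists_isRootedTree_branches htree (W := W)
    (by simp [hW]) (hJS.trans hSW) hJ
  have hleaf : ∀ s ∈ S, ∀ x y, H.Adj s x → H.Adj s y → x = y := by
    intro s hs x y hx hy
    obtain ⟨a, ha⟩ := Set.ncard_eq_one.1 ((hSmem s).1 hs).2
    have hx' : x ∈ H.neighborSet s := hx
    have hy' : y ∈ H.neighborSet s := hy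
    rw [ha] at hx' hy'
    exact hx'.trans hy'.symm
  have hbranch : ∀ j ∈ J, j ≠ c → ∃ z, IsChild W c p z c ∧ Below p z j := fun j hj hjc ↦
    hT.exists_isChild_below (hSW (hJS hj)) (hT.below_root (hSW (hJS hj))) hjc
  have hcS : c ∉ S := by
    intro hcS
    have h2 : 1 < (J.erase c).card := by
      have := Finset.pred_card_le_card_erase (a := c) (s := J)
      omega
    obtain ⟨i, hi, j, hj, hij⟩ := Finset.one_lt_card.1 h2
    rw [Finset.mem_erase] at hi hj
    obtain ⟨z, hz, hzi⟩ := hbranch i hi.2 hi.1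
    obtain ⟨z', hz', hzj⟩ := hbranch j hj.2 hj.1
    obtain rfl := hleaf c hcS z z' ((hadj _ _).2 (Or.inr hz)) ((hadj _ _).2 (Or.inr hz'))
    exact hij (hbr z hz.1 hz.2.1 i hi.2 j hj.2 hzi hzj)
  have hsc : ∀ s ∈ S, s ≠ c := fun s hs hsc ↦ hcS (hsc ▸ hs)
  refine ⟨W, c, p, h, S, J, hJS, ⟨hT, hSW, hcS, ?_, ?_, ?_, hScard, hl, hWcard ▸ hgap,
    hWcard.ge⟩, hWcard, hJ, hbr⟩
  · rintro s hs w hw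
    have hchild : IsChild W c p s (p s) := ⟨hSW hs, hsc s hs, rfl⟩
    have hwp := hleaf s hs w (p s) ((hadj _ _).2 (Or.inr hw)) ((hadj _ _).2 (Or.inl hchild))
    refine hT.not_below_parent (hSW hs) (hsc s hs) (.step ?_)
    rw [← hwp, hw.2.2]
    exact .refl
  · intro x hx hxS hxc
    have hpx : p x ∈ H.neighborSet x := (hadj _ _).2 (Or.inl ⟨hx, hxc, rfl⟩)
    have hpos : 0 < (H.neighborSet x).ncard := (Set.ncard_pos (Set.toFinite _)).2 ⟨_, hpx⟩
    have hne : (H.neighborSet x).ncard ≠ 1 := fun hone ↦ hxS ((hSmem x).2 ⟨hx, hone⟩)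
    obtain ⟨y, hy, hyp⟩ := Set.exists_ne_of_one_lt_ncard
      (show 1 < (H.neighborSet x).ncard by omega) (p x)
    rcases (hadj _ _).1 hy with hxy | hyx
    · exact absurd hxy.2.2.symm hyp
    · exact ⟨y, hyx⟩
  · intro u
    have hz : ∀ j, ∃ z, j ∈ J → IsChild W c p z c ∧ Below p z j := by
      intro j
      by_cases hj : j ∈ J
      · obtain ⟨z, hz⟩ := hbranch j hj (hsc j (hJS hj))
        exact ⟨z, fun _ ↦ hz⟩
      · exact ⟨c, fun hj' ↦ absurd hj' hj⟩
    choose z hz using hz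
    have hcard3 : (J.image z).card = 3 := by
      rw [← hJ]
      refine Finset.card_image_of_injOn fun i hi j hj hij ↦ ?_
      have hi' := hz i hi
      have hj' := hz j hj
      exact hbr (z i) hi'.1.1 hi'.1.2.1 i hi j hj hi'.2 (hij ▸ hj'.2)
    have h2 : 1 < ((J.image z).erase u).card := by
      have := Finset.pred_card_le_card_erase (a := u) (s := J.image z)
      omega
    obtain ⟨w, hw, w', hw', hww⟩ := Finset.one_lt_card.1 h2
    simp only [Finset.mem_erase, Finset.mem_image] at hw hw'
    obtain ⟨hwu, i, hi, rfl⟩ := hw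
    obtain ⟨hwu', j, hj, rfl⟩ := hw'
    exact ⟨z i, z j, hww, hwu, hwu', (hz i hi).1, (hz j hj).1⟩

/-- **Corollary 16.** If `G` is connected and `σ_3 ≥ t_{k+1} - λ(k - 2)` for some
integers `k ≥ 2` and `λ ≥ 2`, then `t_k ≥ t_{k+1} - λ + 1`. -/
theorem corollary16 [Fintype V] (G : SimpleGraph V) [DecidableRel G.Adj]
    (hG : G.Connected) (k l : ℕ) (hk : 2 ≤ k) (hl : 2 ≤ l)
    (h : (maxKEndedOrder G (k + 1) : ℕ∞) ≤
      minDegreeSum G 3 + ((l * (k - 2) : ℕ) : ℕ∞)) :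
    maxKEndedOrder G k + l ≥ maxKEndedOrder G (k + 1) + 1 := by
  classical
  have := hG.nonempty
  by_contra hlt
  obtain ⟨W, c, p, d, S, J, hJS, hT, hW, hJ, hbranch⟩ :=
    exists_isExtremalTree G hk hl (by omega)
  have hsum := hT.sum_degree_add_one_le hJS hJ hbranch
  have hind : IsIndSet G (J : Set V) := fun u hu v hv ↦ hT.not_adj_leaves (hJS hv) (hJS hu)
  have hmin : minDegreeSum G 3 ≤ (∑ v ∈ J, G.degree v : ℕ∞) :=
    iInf₂_le (f := fun (s : Finset V)
      (_ : s ∈ {s : Finset V | s.card = 3 ∧ IsIndSet G ↑s}) ↦ (∑ v ∈ s, G.degree v : ℕ∞))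
      J ⟨hJ, hind⟩
  have hle : (maxKEndedOrder G (k + 1) : ℕ∞) ≤ ((∑ v ∈ J, G.degree v + l * (k - 2) : ℕ) : ℕ∞) := by
    refine h.trans ?_
    push_cast at hmin ⊢
    gcongr
  rw [Nat.cast_le] at hle
  omega
end

section
/- Let G be a connected graph of order n with σ_3 ≥ n − 2k + 4 for some integer k ≥ 2. Then G has a dominating k-ended tree. (Corollary 18) -/
open SimpleGraph

variable {V : Type*}

/-! ### Trees grown inside a graph -/

/-- Some subtree of `G` without isolated vertices has vertex set `S` and all its end-vertices
in `L`. -/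
def HasTreeOn (G : SimpleGraph V) (S L : Set V) : Prop :=
  ∃ H : G.Subgraph, H.Connected ∧ H.spanningCoe.IsAcyclic ∧ H.verts = S ∧
    (∀ v ∈ S, ∃ w, H.Adj v w) ∧ ∀ v ∈ S, (H.neighborSet v).ncard = 1 → v ∈ L

namespace HasTreeOn

variable {G : SimpleGraph V} {S L : Set V}

theorem mono {L' : Set V} (hT : HasTreeOn G S L) (hL : L ⊆ L') : HasTreeOn G S L' := by
  obtain ⟨H, hc, ha, hS, hn, hl⟩ := hT
  exact ⟨H, hc, ha, hS, hn, fun v hv h1 => hL (hl v hv h1)⟩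

theorem of_adj {a b : V} (hab : G.Adj a b) : HasTreeOn G {a, b} {a, b} := by
  refine ⟨G.subgraphOfAdj hab, Subgraph.subgraphOfAdj_connected hab, ?_, rfl, ?_,
    fun v hv _ => hv⟩
  · have hbot : ¬ (⊥ : SimpleGraph V).Reachable a b := by
      simp [hab.ne]
    have := isAcyclic_bot.sup_edge_of_not_reachable hbot
    refine this.anti fun x y hxy => ?_
    simp only [Subgraph.spanningCoe_adj, subgraphOfAdj_adj] at hxy
    simp only [bot_sup_eq, edge_adj]
    have := hab.ne
    grind
  · rintro v (rfl | rfl)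
    · exact ⟨b, by simp⟩
    · exact ⟨a, by simp⟩

/-- Attach a new vertex `x` to the vertex `z` of a tree. -/
theorem insert_vertex (hT : HasTreeOn G S L) {z x : V} (hz : z ∈ S) (hx : x ∉ S)
    (hzx : G.Adj z x) : HasTreeOn G (insert x S) (insert x (L \ {z})) := by
  obtain ⟨H, hc, ha, rfl, hn, hl⟩ := hT
  have hxH : ∀ y, ¬ H.Adj y x := fun y hy => hx hy.snd_mem
  have hadj : ∀ a b, (H ⊔ G.subgraphOfAdj hzx).Adj a b ↔
      H.Adj a b ∨ (a = z ∧ b = x) ∨ (a = x ∧ b = z) := by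
    intro a b
    simp only [Subgraph.sup_adj, subgraphOfAdj_adj, Sym2.eq_iff]
    grind
  refine ⟨H ⊔ G.subgraphOfAdj hzx, ?_, ?_, ?_, ?_, ?_⟩
  · exact Subgraph.connected_sup hc.preconnected
      (Subgraph.subgraphOfAdj_connected hzx).preconnected ⟨z, hz, by simp⟩
  · have hnr : ¬ H.spanningCoe.Reachable x z := by
      rintro ⟨p⟩
      cases p with
      | nil => exact hx hz
      | cons h _ => exact hxH _ h.symm
    refine (ha.sup_edge_of_not_reachable hnr).anti fun a b hab => ?_
    have := hzx.ne
    simp only [Subgraph.spanningCoe_adj, hadj] at hab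
    simp only [sup_adj, Subgraph.spanningCoe_adj, edge_adj]
    grind
  · ext y
    simp only [Subgraph.verts_sup, subgraphOfAdj_verts, Set.mem_union, Set.mem_insert_iff,
      Set.mem_singleton_iff]
    grind
  · rintro v (rfl | hv)
    · exact ⟨z, by simp [hadj]⟩
    · obtain ⟨w, hw⟩ := hn v hv
      exact ⟨w, (hadj _ _).2 (.inl hw)⟩
  · rintro v (rfl | hv) h1
    · exact Set.mem_insert _ _
    · refine Set.mem_insert_of_mem _ ?_
      have hvx : v ≠ x := fun h => hx (h ▸ hv)
      have hvz : v ≠ z := by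
        rintro rfl
        obtain ⟨w, hw⟩ := hn v hv
        obtain ⟨y, hy⟩ := Set.ncard_eq_one.1 h1
        have h2 : w ∈ ({y} : Set V) := hy ▸ (hadj v w).2 (.inl hw)
        have h3 : x ∈ ({y} : Set V) := hy ▸ (hadj v x).2 (.inr (.inl ⟨rfl, rfl⟩))
        rw [Set.mem_singleton_iff] at h2 h3
        exact hxH v (h3 ▸ h2 ▸ hw)
      refine ⟨hl v hv ?_, hvz⟩
      rw [← h1]
      congr 1
      ext y
      simp [Subgraph.mem_neighborSet, hvx, hvz]

/-- Attach a nonempty path to the vertex `z` of a tree. -/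
theorem attach_path {l : List V} : ∀ {S L : Set V} {z u : V}, HasTreeOn G S L → z ∈ S →
    (z :: l).IsChain G.Adj → l.Nodup → (∀ y ∈ l, y ∉ S) → u ∈ l.getLast? →
    HasTreeOn G (S ∪ {y | y ∈ l}) (insert u (L \ {z})) := by
  induction l with
  | nil => simp
  | cons a l ih =>
    intro S L z u hT hz hch hnd hdis hu
    rw [List.isChain_cons_cons] at hch
    have hT' := hT.insert_vertex hz (hdis a (by simp)) hch.1
    rcases List.eq_nil_or_concat l with rfl | ⟨l', b, hl⟩
    · obtain rfl : a = u := by simpa using hu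
      convert hT' using 1
      ext y
      simp [or_comm]
    · have hu' : u ∈ l.getLast? := by
        subst hl
        simpa [List.getLast?_cons] using hu
      have := ih hT' (Set.mem_insert _ _) hch.2 (List.nodup_cons.1 hnd).2 (by grind) hu'
      convert this.mono (L' := insert u (L \ {z})) (by grind) using 1
      ext y
      simp only [Set.mem_union, Set.mem_ofPred_eq, List.mem_cons, Set.mem_insert_iff]
      tauto

theorem of_path {c u : V} {l : List V} (hch : (c :: l).IsChain G.Adj) (hnd : (c :: l).Nodup)
    (hu : u ∈ l.getLast?) : HasTreeOn G {y | y ∈ c :: l} {c, u} := by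
  match l with
  | [] => simp at hu
  | [a] =>
    obtain rfl : a = u := by simpa using hu
    convert of_adj (List.isChain_cons_cons.1 hch).1 using 1
    ext y
    simp
  | a :: b :: l =>
    have h := List.isChain_cons_cons.1 hch
    have := (of_adj h.1).attach_path (z := a) (u := u) (by simp) h.2 (by grind)
      (by simp only [Set.mem_insert_iff, Set.mem_singleton_iff]; grind)
      (by simpa [List.getLast?_cons] using hu)
    convert this.mono (L' := {c, u}) (by grind) using 1
    ext y
    simp
    tauto

theorem exists_isKEndedTree [Finite V] (hT : HasTreeOn G S L) {k : ℕ} (hL : L.ncard ≤ k) :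
    ∃ H : G.Subgraph, IsKEndedTree G k H ∧ H.verts = S := by
  obtain ⟨H, hc, ha, rfl, -, hl⟩ := hT
  refine ⟨H, .inl ⟨⟨hc, ha.embedding H.coeEmbeddingSpanningCoe⟩, le_trans ?_ hL⟩, rfl⟩
  exact Set.ncard_le_ncard (fun v hv => hl v hv.1 hv.2)

end HasTreeOn

/-- If the complement of a nonempty set is not independent in a connected graph, then the set has
a neighbour lying on an edge outside the set. -/
theorem SimpleGraph.Connected.exists_adj_adj_of_not_isIndSet_compl {G : SimpleGraph V}
    (hG : G.Connected) {S : Set V} (hS : S.Nonempty) (hind : ¬ IsIndSet G Sᶜ) :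
    ∃ z ∈ S, ∃ x ∉ S, ∃ y ∉ S, G.Adj z x ∧ G.Adj x y := by
  obtain ⟨s, hs⟩ := hS
  simp only [IsIndSet, not_forall, not_not] at hind
  obtain ⟨p, hp, q, hq, hpq⟩ := hind
  obtain ⟨w⟩ := hG.preconnected p s
  clear hG
  induction w generalizing q with
  | nil => exact absurd hs hp
  | @cons p p' s h w ih =>
    by_cases hp' : p' ∈ S
    · exact ⟨p', hp', p, hp, q, hq, h.symm, hpq⟩
    · exact ih hs hp' p hp h.symm

/-- A non-dominating tree can be enlarged by two vertices at the cost of one end-vertex. -/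
theorem HasTreeOn.exists_larger [Finite V] {G : SimpleGraph V} (hG : G.Connected) {S L : Set V}
    (hT : HasTreeOn G S L) (hind : ¬ IsIndSet G Sᶜ) :
    ∃ S' L', HasTreeOn G S' L' ∧ L'.ncard ≤ L.ncard + 1 ∧ S'.ncard = S.ncard + 2 := by
  have hS : S.Nonempty := by
    obtain ⟨H, hc, -, rfl, -⟩ := hT
    exact hc.nonempty
  obtain ⟨z, hz, x, hx, y, hy, hzx, hxy⟩ := hG.exists_adj_adj_of_not_isIndSet_compl hS hind
  have hy' : y ∉ insert x S := by
    have := hxy.ne'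
    grind
  refine ⟨_, insert y L, (((hT.insert_vertex hz hx hzx).insert_vertex
    (Set.mem_insert _ _) hy' hxy).mono (by grind)), Set.ncard_insert_le _ _, ?_⟩
  rw [Set.ncard_insert_of_notMem hy', Set.ncard_insert_of_notMem hx]

/-- Iterating the enlargement of non-dominating trees. -/
theorem HasTreeOn.exists_larger_iterate [Finite V] {G : SimpleGraph V} (hG : G.Connected) {k : ℕ}
    (hnd : ∀ S L, HasTreeOn G S L → L.ncard ≤ k → ¬ IsIndSet G Sᶜ) {S L : Set V}
    (hT : HasTreeOn G S L) (d : ℕ) (hd : L.ncard + d ≤ k + 1) :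
    ∃ S' L', HasTreeOn G S' L' ∧ L'.ncard ≤ L.ncard + d ∧ S'.ncard = S.ncard + 2 * d := by
  induction d with
  | zero => exact ⟨S, L, hT, le_rfl, rfl⟩
  | succ d ih =>
    obtain ⟨S₁, L₁, hT₁, hL₁, hS₁⟩ := ih (by omega)
    obtain ⟨S₂, L₂, hT₂, hL₂, hS₂⟩ := hT₁.exists_larger hG (hnd _ _ hT₁ (by omega))
    exact ⟨S₂, L₂, hT₂, by omega, by omega⟩

/-! ### Spiders with three legs -/

/-- The lists `A`, `B`, `C` are the legs, listed outwards, of a spider in `G` with centre `c`. -/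
structure IsSpider (G : SimpleGraph V) (c : V) (A B C : List V) : Prop where
  nodup : (c :: (A ++ B ++ C)).Nodup
  chain_left : (c :: A).IsChain G.Adj
  chain_mid : (c :: B).IsChain G.Adj
  chain_right : (c :: C).IsChain G.Adj

/-- Every path of `G` has at most `m` vertices. -/
def PathsLE (G : SimpleGraph V) (m : ℕ) : Prop :=
  ∀ l : List V, l.Nodup → l.IsChain G.Adj → l.length ≤ m

theorem isChain_adj_reverse {G : SimpleGraph V} {l : List V} :
    l.reverse.IsChain G.Adj ↔ l.IsChain G.Adj := by
  rw [List.isChain_reverse]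
  simp only [adj_comm]

theorem isChain_adj_append {G : SimpleGraph V} {l₁ l₂ : List V} {a b : V}
    (h₁ : l₁.IsChain G.Adj) (h₂ : l₂.IsChain G.Adj) (ha : a ∈ l₁.getLast?) (hb : b ∈ l₂.head?)
    (hab : G.Adj a b) : (l₁ ++ l₂).IsChain G.Adj := by
  rw [List.isChain_append]
  refine ⟨h₁, h₂, fun x hx y hy => ?_⟩
  rwa [Option.mem_unique hx ha, Option.mem_unique hy hb]

theorem isChain_adj_reverse_append_cons {G : SimpleGraph V} {l₁ l₂ : List V} {c : V}
    (h₁ : (c :: l₁).IsChain G.Adj) (h₂ : (c :: l₂).IsChain G.Adj) :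
    (l₁.reverse ++ c :: l₂).IsChain G.Adj := by
  rw [List.isChain_split, ← List.reverse_cons, isChain_adj_reverse]
  exact ⟨h₁, h₂⟩

theorem getLast?_cons_of_mem {l : List V} {c u : V} (hu : u ∈ l.getLast?) :
    u ∈ (c :: l).getLast? := by
  simp_all [List.getLast?_cons]

theorem exists_eq_of_cons_eq_append_cons {c s : V} {A X Y : List V}
    (h : c :: A = X ++ s :: Y) : ∃ X', A = X' ++ Y ∧ s ∈ (c :: X').getLast? := by
  obtain _ | ⟨x, X⟩ := X
  · obtain ⟨rfl, rfl⟩ : c = s ∧ A = Y := by simpa using h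
    exact ⟨[], by simp, by simp⟩
  · exact ⟨X ++ [s], by grind, by simp [List.getLast?_cons]⟩

theorem countP_add_countP_add_countP_le (p q r : V → Bool) (L : List V) : ∀ x y : V,
    (∀ X s t Y, x :: y :: L = X ++ s :: t :: Y →
      ¬ (p s ∧ q t) ∧ ¬ (p s ∧ r t) ∧ ¬ (q s ∧ r t) ∧ ¬ (r s ∧ q t)) →
    (∀ X s b t Y, x :: y :: L = X ++ s :: b :: t :: Y → ¬ (p s ∧ q t) ∧ ¬ (p s ∧ r t)) →
    (∀ u ∈ (x :: y :: L).getLast?, p u = false) →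
    (y :: L).countP p + L.countP q + L.countP r ≤
      L.length + (1 - ((p x).toNat + (q y).toNat + (r y).toNat)) := by
  induction L with
  | nil =>
    intro x y _ _ h
    simp [h y (by simp)]
  | cons z L ih =>
    intro x y h1 h2 h3
    have hrec := ih y z (fun X s t Y h => h1 (x :: X) s t Y (by simp [h]))
      (fun X s b t Y h => h2 (x :: X) s b t Y (by simp [h]))
      (fun u hu => h3 u (by simpa [List.getLast?_cons] using hu))
    have hyz := h1 [x] y z L rfl
    have hxz := h2 [] x y z L rfl
    simp only [List.countP_cons, List.length_cons] at hrec ⊢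
    clear ih h1 h2 h3
    cases hpx : p x <;> cases hqy : q y <;> cases hry : r y <;> cases hpy : p y <;>
      cases hqz : q z <;> cases hrz : r z <;> simp_all <;> omega

namespace IsSpider

variable {G : SimpleGraph V} {c u v w : V} {A B C : List V}

theorem swap_left (hs : IsSpider G c A B C) : IsSpider G c B A C :=
  ⟨(((List.perm_append_comm.append_right C).cons c).nodup_iff).1 hs.nodup,
    hs.chain_mid, hs.chain_left, hs.chain_right⟩

theorem swap_right (hs : IsSpider G c A B C) : IsSpider G c A C B :=
  ⟨by have := hs.nodup; grind, hs.chain_left, hs.chain_right, hs.chain_mid⟩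

theorem hasTreeOn (hs : IsSpider G c A B C) (hu : u ∈ A.getLast?) (hv : v ∈ B.getLast?)
    (hw : w ∈ C.getLast?) : HasTreeOn G {y | y ∈ c :: (A ++ B ++ C)} {u, v, w} := by
  have hnd := hs.nodup
  have h1 := HasTreeOn.of_path hs.chain_left (by grind) hu
  have h2 := h1.attach_path (by simp) hs.chain_mid (by grind)
    (by simp only [Set.mem_ofPred_eq]; grind) hv
  have h3 := h2.attach_path (by simp) hs.chain_right (by grind)
    (by simp only [Set.mem_union, Set.mem_ofPred_eq]; grind) hw
  convert h3.mono (L' := {u, v, w}) (by grind) using 1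
  ext y
  simp
  tauto

theorem not_adj_ends (hs : IsSpider G c A B C)
    (hp : PathsLE G (A.length + B.length + C.length))
    (hu : u ∈ A.getLast?) (hv : v ∈ B.getLast?) : ¬ G.Adj u v := by
  intro huv
  obtain ⟨hnd, hA, hB, hC⟩ := hs
  have := hp ((C.reverse ++ c :: A) ++ B.reverse) (by grind)
    (isChain_adj_append (isChain_adj_reverse_append_cons hC hA) (isChain_adj_reverse.2 hB.tail)
      (List.mem_getLast?_append_of_mem_getLast? (getLast?_cons_of_mem hu))
      (by simpa using hv) huv)
  simp at this
  omega

theorem left_ne_nil {m : ℕ} (hs : IsSpider G c A B C) (hp : PathsLE G m)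
    (hm : m ≤ A.length + B.length + C.length) : A ≠ [] := by
  rintro rfl
  obtain ⟨hnd, -, hB, hC⟩ := hs
  have := hp (C.reverse ++ c :: B) (by grind) (isChain_adj_reverse_append_cons hC hB)
  simp at this hm
  omega

theorem not_adj_head (hs : IsSpider G c A B C)
    (hp : PathsLE G (A.length + B.length + C.length))
    {a : V} (ha : a ∈ A.head?) (hv : v ∈ B.getLast?) : ¬ G.Adj v a := by
  intro hva
  obtain ⟨hnd, hA, hB, hC⟩ := hs
  have := hp ((C.reverse ++ c :: B) ++ A) (by grind)
    (isChain_adj_append (isChain_adj_reverse_append_cons hC hB) hA.tail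
      (List.mem_getLast?_append_of_mem_getLast? (getLast?_cons_of_mem hv)) ha hva)
  simp at this
  omega

/-- The end of a leg and the end of another leg have no crossing neighbours on the first leg, even
if the neighbours are separated by one vertex. -/
theorem not_adj_of_adj_left {m : ℕ} (hs : IsSpider G c A B C) (hp : PathsLE G m)
    (hu : u ∈ A.getLast?) (hv : v ∈ B.getLast?) {s t : V} {X Y Z : List V}
    (hm : m + Z.length ≤ A.length + B.length + C.length)
    (hsplit : c :: A = X ++ s :: (Z ++ t :: Y)) (hus : G.Adj u s) : ¬ G.Adj v t := by
  intro hvt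
  obtain ⟨hnd, hA, hB, hC⟩ := hs
  obtain ⟨X, rfl, hX⟩ := exists_eq_of_cons_eq_append_cons hsplit
  clear hsplit
  have hu' : u ∈ (t :: Y).getLast? := by
    simpa [List.getLast?_append, List.getLast?_cons] using hu
  have hAX : (c :: X).IsChain G.Adj := by
    rw [← List.cons_append] at hA
    exact hA.left_of_append
  have hAY : (t :: Y).IsChain G.Adj := hA.tail.right_of_append.right_of_append
  have := hp ((C.reverse ++ c :: X) ++ ((t :: Y).reverse ++ B.reverse))
    (by
      clear hA hB hC hAX hAY hu hu' hv hX hm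
      simp only [List.nodup_append, List.nodup_cons, List.nodup_reverse, List.mem_append,
        List.mem_reverse, List.mem_cons] at hnd ⊢
      grind)
    (isChain_adj_append (isChain_adj_reverse_append_cons hC hAX)
      (isChain_adj_append (isChain_adj_reverse.2 hAY) (isChain_adj_reverse.2 hB.tail)
        (a := t) (by simp) (by simpa using hv) hvt.symm)
      (List.mem_getLast?_append_of_mem_getLast? hX)
      (List.mem_head?_append_of_mem_head? (by rwa [List.head?_reverse])) hus.symm)
  simp at this hm
  omega

/-- The ends of two legs have no consecutive neighbours on the third one. -/
theorem not_adj_of_adj_mid (hs : IsSpider G c A B C)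
    (hp : PathsLE G (A.length + B.length + C.length))
    (hv : v ∈ B.getLast?) (hw : w ∈ C.getLast?) {s t : V} {X Y : List V}
    (hsplit : c :: A = X ++ s :: t :: Y) (hvs : G.Adj v s) : ¬ G.Adj w t := by
  intro hwt
  obtain ⟨hnd, hA, hB, hC⟩ := hs
  obtain ⟨X, rfl, hX⟩ := exists_eq_of_cons_eq_append_cons hsplit
  clear hsplit
  have hAX : (c :: X).IsChain G.Adj := by
    rw [← List.cons_append] at hA
    exact hA.left_of_append
  have hs : s ∈ (X.reverse ++ c :: C).head? := by
    rw [List.append_cons, ← List.reverse_cons]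
    exact List.mem_head?_append_of_mem_head? (by rwa [List.head?_reverse])
  have := hp (B ++ ((X.reverse ++ c :: C) ++ t :: Y))
    (by
      clear hA hB hC hAX hv hw hX hs hp
      simp only [List.nodup_append, List.nodup_cons, List.nodup_reverse, List.mem_append,
        List.mem_reverse, List.mem_cons] at hnd ⊢
      grind)
    (isChain_adj_append hB.tail
      (isChain_adj_append (isChain_adj_reverse_append_cons hAX hC) hA.tail.right_of_append
        (List.mem_getLast?_append_of_mem_getLast? (getLast?_cons_of_mem hw)) (b := t)
        (by simp) hwt)
      hv (List.mem_head?_append_of_mem_head? hs) hvs)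
  simp at this
  omega

/-- The neighbours of the three ends on one leg, and on the centre for the end of that leg, number
at most the length of the leg. -/
theorem countP_leg_le [DecidableRel G.Adj] (hs : IsSpider G c A B C) {m : ℕ}
    (hp : PathsLE G m) (hm : m + 1 ≤ A.length + B.length + C.length)
    (hu : u ∈ A.getLast?) (hv : v ∈ B.getLast?) (hw : w ∈ C.getLast?) :
    (c :: A).countP (G.Adj u ·) + A.countP (G.Adj v ·) + A.countP (G.Adj w ·) ≤ A.length := by
  have hp' : PathsLE G (A.length + B.length + C.length) := fun l h1 h2 =>
    (hp l h1 h2).trans (by omega)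
  have hp'' : PathsLE G (A.length + C.length + B.length) := fun l h1 h2 =>
    (hp l h1 h2).trans (by omega)
  obtain _ | ⟨a, L⟩ := A
  · simp at hu
  have h1 := hs.not_adj_head hp' (a := a) (by simp) hv
  have h2 := hs.swap_right.not_adj_head hp'' (a := a) (by simp) hw
  have := countP_add_countP_add_countP_le (G.Adj u ·) (G.Adj v ·) (G.Adj w ·) L c a
    (fun X s t Y h => by
      simp only [decide_eq_true_eq, not_and]
      exact ⟨hs.not_adj_of_adj_left (Z := []) hp hu hv (by simp at hm ⊢; omega) h,
        hs.swap_right.not_adj_of_adj_left (Z := []) hp hu hw (by simp at hm ⊢; omega) h,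
        hs.not_adj_of_adj_mid hp' hv hw h, hs.swap_right.not_adj_of_adj_mid hp'' hw hv h⟩)
    (fun X s b t Y h => by
      simp only [decide_eq_true_eq, not_and]
      exact ⟨hs.not_adj_of_adj_left (Z := [b]) hp hu hv (by simp at hm ⊢; omega) h,
        hs.swap_right.not_adj_of_adj_left (Z := [b]) hp hu hw (by simp at hm ⊢; omega) h⟩)
    (by
      intro b hb
      have : u = b := by
        simp only [List.getLast?_cons, Option.mem_def, Option.some.injEq] at hu hb
        grind
      simp [this])
  simp only [List.countP_cons, List.length_cons, h1, h2, decide_false] at this ⊢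
  by_cases h3 : G.Adj u c <;> simp [h3] at this ⊢ <;> omega

/-- In a spider of maximum order, the neighbours of the end of a leg lie on the spider. -/
theorem degree_le [Fintype V] [DecidableRel G.Adj] (hs : IsSpider G c A B C)
    (hmax : ∀ c' A', IsSpider G c' A' B C → A'.length ≤ A.length) (hu : u ∈ A.getLast?) :
    G.degree u ≤ (c :: A).countP (G.Adj u ·) + B.countP (G.Adj u ·) + C.countP (G.Adj u ·) := by
  classical
  have hmem : ∀ x, G.Adj u x → x ∈ c :: A ++ B ++ C := by
    intro x hx
    by_contra hxs
    have := hmax c (A ++ [x]) ⟨by have := hs.nodup; grind, by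
      have := hs.chain_left
      rw [← List.cons_append, List.isChain_append]
      refine ⟨this, by simp, ?_⟩
      simp only [List.getLast?_cons, Option.mem_def] at hu ⊢
      grind, hs.chain_mid, hs.chain_right⟩
    simp at this
  rw [← List.countP_append, ← List.countP_append, ← card_neighborFinset_eq_degree,
    List.countP_eq_length_filter]
  refine (Finset.card_le_card fun x hx => ?_).trans (List.toFinset_card_le _)
  rw [mem_neighborFinset] at hx
  simpa [hx] using hmem x hx

end IsSpider

/-- A connected graph without dominating paths has a spider with at least two vertices more than
every path. -/
theorem exists_isSpider_pathsLE [Finite V] {G : SimpleGraph V} (hG : G.Connected)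
    (hnd : ∀ l : List V, 2 ≤ l.length → l.Nodup → l.IsChain G.Adj →
      ¬ IsIndSet G {y | y ∈ l}ᶜ) (hedge : ∃ a b, G.Adj a b) :
    ∃ c A B C m, IsSpider G c A B C ∧ PathsLE G m ∧ m + 1 = A.length + B.length + C.length := by
  have := Fintype.ofFinite V
  obtain ⟨a, b, hab⟩ := hedge
  let P : ℕ → Prop := fun j => ∃ l : List V, l.Nodup ∧ l.IsChain G.Adj ∧ l.length = j
  have hP2 : P 2 := ⟨[a, b], by simp [hab.ne], by simp [hab], rfl⟩
  have hbound : ∀ j, P j → j ≤ Fintype.card V := by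
    rintro j ⟨l, h1, -, rfl⟩
    exact h1.length_le_card
  classical
  let m := Nat.findGreatest P (Fintype.card V)
  have hm2 : 2 ≤ m := Nat.le_findGreatest (hbound 2 hP2) hP2
  have hpaths : PathsLE G m := fun l h1 h2 =>
    Nat.le_findGreatest (hbound _ ⟨l, h1, h2, rfl⟩) ⟨l, h1, h2, rfl⟩
  obtain ⟨l, hl1, hl2, hl3⟩ : P m := Nat.findGreatest_spec (hbound 2 hP2) hP2
  have hne : {y | y ∈ l}.Nonempty := by
    obtain _ | ⟨y, l⟩ := l
    · simp at hl3; omega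
    · exact ⟨y, by simp⟩
  obtain ⟨z, hz, x, hx, y, hy, hzx, hxy⟩ :=
    hG.exists_adj_adj_of_not_isIndSet_compl hne (hnd l (by omega) hl1 hl2)
  obtain ⟨X, Y, rfl⟩ := List.append_of_mem hz
  simp only [Set.mem_ofPred_eq] at hx hy
  refine ⟨z, X.reverse, Y, [x, y], m, ⟨?_, ?_, ?_, by simp [hzx, hxy]⟩, hpaths,
    by simp at hl3 ⊢; omega⟩
  · have hne := hxy.ne
    clear hl2 hnd hpaths hl3 hbound
    simp only [List.nodup_append, List.nodup_cons, List.nodup_reverse, List.mem_append,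
      List.mem_reverse, List.mem_cons] at hl1 hx hy ⊢
    grind
  · rw [List.append_cons] at hl2
    have := hl2.left_of_append
    rw [← isChain_adj_reverse] at this
    simpa using this
  · exact hl2.right_of_append

/-- A connected graph without dominating paths has a spider of maximum order with at least two
vertices more than every path. -/
theorem exists_maximum_isSpider [Finite V] {G : SimpleGraph V} (hG : G.Connected)
    (hnd : ∀ l : List V, 2 ≤ l.length → l.Nodup → l.IsChain G.Adj →
      ¬ IsIndSet G {y | y ∈ l}ᶜ) (hedge : ∃ a b, G.Adj a b) :
    ∃ c A B C m, IsSpider G c A B C ∧ PathsLE G m ∧ A ≠ [] ∧ B ≠ [] ∧ C ≠ [] ∧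
      m + 1 ≤ A.length + B.length + C.length ∧ ∀ c' A' B' C', IsSpider G c' A' B' C' →
        A'.length + B'.length + C'.length ≤ A.length + B.length + C.length := by
  have := Fintype.ofFinite V
  obtain ⟨c, A, B, C, m, hs, hp, hm⟩ := exists_isSpider_pathsLE hG hnd hedge
  classical
  let P : ℕ → Prop := fun j => ∃ c A B C, IsSpider G c A B C ∧
    A.length + B.length + C.length = j
  have hbound : ∀ j, P j → j ≤ Fintype.card V := by
    rintro j ⟨c, A, B, C, h, rfl⟩
    have := h.nodup.length_le_card
    simp at this
    omega
  have hPm : P (m + 1) := ⟨c, A, B, C, hs, hm.symm⟩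
  have hle := Nat.le_findGreatest (hbound _ hPm) hPm
  obtain ⟨c, A, B, C, hs, hsize⟩ := Nat.findGreatest_spec (hbound _ hPm) hPm
  have hmax : ∀ c' A' B' C', IsSpider G c' A' B' C' →
      A'.length + B'.length + C'.length ≤ A.length + B.length + C.length := by
    intro c' A' B' C' h
    have hP : P (A'.length + B'.length + C'.length) := ⟨c', A', B', C', h, rfl⟩
    exact (Nat.le_findGreatest (hbound _ hP) hP).trans hsize.ge
  rw [← hsize] at hle
  exact ⟨c, A, B, C, m, hs, hp, hs.left_ne_nil hp (by omega),
    hs.swap_left.left_ne_nil hp (by omega),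
    hs.swap_right.swap_left.left_ne_nil hp (by omega), hle, hmax⟩

/-- **Corollary 18.** If `G` is connected of order `n` and `σ_3 ≥ n - 2k + 4` for
some integer `k ≥ 2`, then `G` has a dominating `k`-ended tree. -/
theorem corollary18 [Fintype V] (G : SimpleGraph V) [DecidableRel G.Adj]
    (hG : G.Connected) (k : ℕ) (hk : 2 ≤ k)
    (h : (Fintype.card V : ℕ∞) + 4 ≤ minDegreeSum G 3 + ((2 * k : ℕ) : ℕ∞)) :
    ∃ H : G.Subgraph, IsKEndedTree G k H ∧ IsIndSet G H.vertsᶜ := by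
  classical
  by_contra hcon
  push Not at hcon
  have hnd : ∀ S L, HasTreeOn G S L → L.ncard ≤ k → ¬ IsIndSet G Sᶜ := by
    intro S L hT hL
    obtain ⟨H, hH, rfl⟩ := hT.exists_isKEndedTree hL
    exact hcon H hH
  have hedge : ∃ a b, G.Adj a b := by
    by_contra! hno
    obtain ⟨a⟩ := hG.nonempty
    exact hcon (G.singletonSubgraph a)
      (.inr ⟨by omega, Subgraph.singletonSubgraph_connected, .inl (by simp)⟩)
      fun x _ y _ => hno x y
  have hndpath : ∀ l : List V, 2 ≤ l.length → l.Nodup → l.IsChain G.Adj →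
      ¬ IsIndSet G {y | y ∈ l}ᶜ := by
    intro l hl h1 h2
    obtain _ | ⟨c, l⟩ := l
    · simp at hl
    obtain ⟨u, hu⟩ : ∃ u, u ∈ l.getLast? := by
      obtain _ | ⟨a, l⟩ := l
      · simp at hl
      · simp [List.getLast?_cons]
    exact hnd _ _ (HasTreeOn.of_path h2 h1 hu) ((Set.ncard_insert_le _ _).trans (by simpa))
  obtain ⟨c, A, B, C, m, hs, hp, hA, hB, hC, hm, hmax⟩ := exists_maximum_isSpider hG hndpath hedge
  obtain ⟨u, hu⟩ : ∃ u, u ∈ A.getLast? := ⟨_, List.getLast?_eq_some_getLast hA⟩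
  obtain ⟨v, hv⟩ : ∃ v, v ∈ B.getLast? := ⟨_, List.getLast?_eq_some_getLast hB⟩
  obtain ⟨w, hw⟩ : ∃ w, w ∈ C.getLast? := ⟨_, List.getLast?_eq_some_getLast hC⟩
  have hpaths : ∀ {j}, A.length + B.length + C.length = j → PathsLE G j := fun hj l h1 h2 =>
    (hp l h1 h2).trans (by omega)
  -- The rearrangements of the spider that put each leg first.
  have hsB : IsSpider G c B A C := hs.swap_left
  have hsC : IsSpider G c C A B := hs.swap_right.swap_left
  have huA := List.mem_of_getLast? hu
  have hvB := List.mem_of_getLast? hv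
  have hwC := List.mem_of_getLast? hw
  have hne : u ≠ v ∧ u ≠ w ∧ v ≠ w := by
    have := hs.nodup
    simp only [List.nodup_append, List.nodup_cons, List.mem_append] at this
    grind
  have huv := hs.not_adj_ends (hpaths rfl) hu hv
  have huw := hs.swap_right.not_adj_ends (hpaths (by omega)) hu hw
  have hvw := hsB.swap_right.not_adj_ends (hpaths (by omega)) hv hw
  have hlegA := hs.countP_leg_le hp (by omega) hu hv hw
  have hlegB := hsB.countP_leg_le hp (by omega) hv hu hw
  have hlegC := hsC.countP_leg_le hp (by omega) hw hu hv
  have hdu := hs.degree_le (fun c' A' h' => by have := hmax _ _ _ _ h'; omega) hu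
  have hdv := hsB.degree_le (fun c' A' h' => by have := hmax _ _ _ _ h'; omega) hv
  have hdw := hsC.degree_le (fun c' A' h' => by have := hmax _ _ _ _ h'; omega) hw
  have hcard : A.length + B.length + C.length + 1 + 2 * (k - 2) ≤ Fintype.card V := by
    have hL : ({u, v, w} : Set V).ncard = 3 := Set.ncard_eq_three.2 ⟨u, v, w, hne.1, hne.2.1, hne.2.2, rfl⟩
    obtain ⟨S, L, -, -, hS⟩ :=
      (hs.hasTreeOn hu hv hw).exists_larger_iterate hG hnd (k - 2) (by omega)
    have h1 : {y | y ∈ c :: (A ++ B ++ C)}.ncard = A.length + B.length + C.length + 1 := by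
      have : {y | y ∈ c :: (A ++ B ++ C)} = ((c :: (A ++ B ++ C)).toFinset : Set V) := by
        ext
        simp
      rw [this, Set.ncard_coe_finset, List.toFinset_card_of_nodup hs.nodup]
      simp [add_assoc]
    rw [← h1, ← hS, ← Nat.card_eq_fintype_card]
    exact Set.ncard_le_card S
  have hsum : minDegreeSum G 3 ≤ ((G.degree u + G.degree v + G.degree w : ℕ) : ℕ∞) := by
    have hmem : ({u, v, w} : Finset V) ∈ {s : Finset V | s.card = 3 ∧ IsIndSet G ↑s} := by
      refine ⟨Finset.card_eq_three.2 ⟨u, v, w, hne.1, hne.2.1, hne.2.2, rfl⟩, ?_⟩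
      intro x hx y hy
      simp only [Finset.coe_insert, Finset.coe_singleton, Set.mem_insert_iff,
        Set.mem_singleton_iff] at hx hy
      have hvu := mt Adj.symm huv
      have hwu := mt Adj.symm huw
      have hwv := mt Adj.symm hvw
      rcases hx with rfl | rfl | rfl <;> rcases hy with rfl | rfl | rfl <;>
        first | assumption | exact G.irrefl
    refine (iInf₂_le _ hmem).trans (le_of_eq ?_)
    rw [Finset.sum_insert (by simp [hne]), Finset.sum_insert (by simp [hne]),
      Finset.sum_singleton]
    push_cast
    ring
  have hfin := h.trans (add_le_add_left hsum _)
  norm_cast at hfin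
  omega
end
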